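/- arXiv:2006.06107 — 2 statements merged into one kernel-verified Lean document; each statement's English description precedes it below -/
import Mathlib

section
/- Let k ≥ 3 and m ≥ 2 be integers. There exists N such that the following holds. Let G be a graph whose vertex set is partitioned into two nonempty parts V₁ and V₂ of sizes n₁ and n₂ with n₁ ≥ n₂ ≥ N. Suppose G contains no m pairwise vertex-disjoint copies of the wheel W_{2k+1}, and suppose that for each i ∈ {1,2}, every set S ⊆ V_i with |S| ≤ m(k+1) has at least m(2k+1) common neighbors in the other part. Then, with n = n₁ + n₂, the number of edges of G satisfies e(G) ≤ max over integers n₀ with 1 ≤ n₀ ≤ n−m+1 of [ C(m−1,2) + ⌊(k−1)·n₀/2⌋ + (n₀+m−1)(n−m+1) − n₀² + 1 ]. -/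
/-!
Write `V₁`, `V₂` for the parts. A star with `k` leaves inside one part is completed to a wheel by
common neighbors in the other part, and more generally a star with `i` leaves in one part together
with a few short paths in the other part, completely joined to it, gives a wheel
(`wheel_of_segs`): two disjoint edges are needed if `i = k - 1`, and `k - i` paths on three
vertices if `2 i ≥ k`.

Deletion. Let `H` be the set of vertices with large degree inside their own part. Each of them can be
made the hub of a new wheel disjoint from any few given ones (`IsPack.absorb`), so a family of `t`
disjoint wheels avoiding `H` extends to `t + |H|` disjoint wheels. Hence `|H| ≤ m - 1`, and a family
avoiding `H` that cannot be enlarged has at most `r = m - 1 - |H|` wheels. After deletion of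
`H` and of these wheels, the parts `A`, `B` span no wheel, and still have rich common neighborhoods
(`Good`). The wheels cover boundedly many vertices outside `H`, all of bounded degree inside
their part, so they cost only a bounded number of inner edges.

Core inequality (`Good.core`). Let `p = |A| ≥ |B|` and let `μ` be the number of missing cross pairs.
Let `α i` and `β i` be the numbers of vertices of degree at least `i` inside `A` and inside `B`. As
inner degrees are at most `k - 1`, the sum of the inner degrees is `∑ s i` over `1 ≤ i ≤ k - 1`, where
`s i = α i + β (k - i)`. Suppose it exceeds `(k - 1) p + 2 + 2 μ`. If both `α i` and `β (k - i)` were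
linear in `p`, a star in one part and many paths in the other would give a wheel (`Good.stage1`),
so every `s i` is at most `(1 + ε) p`. This forces every `s i` to be close to `p` and `μ` to be at
most a small multiple of `p`. Some `s i` exceeds `p`; then one of `α i`, `β (k - i)` is large
and the other is nonzero, and a case analysis on `i` again yields a wheel (`Good.stage2`).

Comparison. Counting edges at `H`, cross edges and inner edges (`edges_le`), and evaluating the
extremal function at `M - r`, where `M` is the size of the larger part minus `H`, gives the bound:
each of the `r` shifted vertices gains about `M` edges, which outweighs the bounded loss above
(`numeric`).
-/

open SimpleGraph

/-- `G` contains `H` as a (not necessarily induced) subgraph. -/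
def Contains {α β : Type*} (G : SimpleGraph α) (H : SimpleGraph β) : Prop :=
  ∃ f : H →g G, Function.Injective f

/-- The join `G₁ ⊗ G₂` of two graphs: disjoint union plus all cross edges. -/
def graphJoin {α β : Type*} (G : SimpleGraph α) (H : SimpleGraph β) :
    SimpleGraph (α ⊕ β) :=
  SimpleGraph.fromRel (fun u v =>
    match u, v with
    | Sum.inl a, Sum.inl b => G.Adj a b
    | Sum.inr a, Sum.inr b => H.Adj a b
    | Sum.inl _, Sum.inr _ => True
    | Sum.inr _, Sum.inl _ => True)

/-- The wheel `W_q` on `q` vertices: a hub joined to all vertices of a cycle `C_{q-1}`. -/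
def wheelGraph (q : ℕ) : SimpleGraph (Unit ⊕ Fin (q - 1)) :=
  graphJoin (⊥ : SimpleGraph Unit) (cycleGraph (q - 1))

/-- The star `S_{k+1}` with `k` leaves: a hub joined to `k` independent vertices. -/
def starGraph (k : ℕ) : SimpleGraph (Unit ⊕ Fin k) :=
  graphJoin (⊥ : SimpleGraph Unit) (⊥ : SimpleGraph (Fin k))

/-- `m` pairwise vertex-disjoint copies of `H`. -/
def disjointCopies (m : ℕ) {V : Type*} (H : SimpleGraph V) : SimpleGraph (Fin m × V) :=
  SimpleGraph.fromRel (fun u v => u.1 = v.1 ∧ H.Adj u.2 v.2)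

/-- The disjoint union of the family of graphs `G i`. -/
def disjointSigma {ι : Type*} {V : ι → Type*} (G : ∀ i, SimpleGraph (V i)) :
    SimpleGraph (Σ i, V i) :=
  SimpleGraph.fromRel (fun u v => ∃ h : u.1 = v.1, (G v.1).Adj (h ▸ u.2) v.2)

/-- The Turán number `ex(n, H)`: the maximum number of edges of an `H`-free graph
on `n` vertices. -/
noncomputable def exNum {β : Type*} (n : ℕ) (H : SimpleGraph β) : ℕ :=
  sSup {e | ∃ G : SimpleGraph (Fin n), ¬ Contains G H ∧ Nat.card G.edgeSet = e}

/-! ### Wheels from lists -/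

set_option linter.unusedSectionVars false


/-- A copy of the wheel with hub and a `2k`-cycle as rim, all of whose vertices lie in `X`. -/
def HasWheel {V : Type} (G : SimpleGraph V) (k : ℕ) (X : Finset V) : Prop :=
  ∃ f : wheelGraph (2 * k + 1) →g G, Function.Injective f ∧ ∀ x, f x ∈ X

/-- A wheel from a hub and its rim, the rim being given as a cyclic list. -/
lemma hasWheel_of_list {V : Type} {G : SimpleGraph V} {k : ℕ} {X : Finset V} (v : V) (hv : v ∈ X)
    (L : List V) (hlen : L.length = 2 * k) (hnd : L.Nodup) (hX : ∀ x ∈ L, x ∈ X)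
    (hadj : ∀ x ∈ L, G.Adj v x) (hch : L.IsChain G.Adj)
    (hcl : ∀ x ∈ L.getLast?, ∀ y ∈ L.head?, G.Adj x y) : HasWheel G k X := by
  have hl : L.length = 2 * k + 1 - 1 := by omega
  let g : Fin (2 * k + 1 - 1) → V := fun i => L[i.val]'(by have := i.isLt; omega)
  have hgm : ∀ i, g i ∈ L := fun i => List.getElem_mem _
  have key : ∀ i j : Fin (2 * k + 1 - 1), (i - j).val = 1 → G.Adj (g j) (g i) := by
    intro i j hij
    have hi := i.isLt
    have hj := j.isLt
    rw [Fin.val_sub] at hij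
    have h2 : i.val = j.val + 1 ∨ (i.val = 0 ∧ j.val + 1 = 2 * k) := by
      rcases le_or_gt j.val i.val with h | h
      · left
        rw [show 2 * k + 1 - 1 - j.val + i.val = (i.val - j.val) + (2 * k + 1 - 1) by omega,
          Nat.add_mod_right, Nat.mod_eq_of_lt (by omega)] at hij
        omega
      · right
        rw [Nat.mod_eq_of_lt (by omega)] at hij
        omega
    rcases h2 with h | ⟨h0, h1⟩
    · have := List.isChain_iff_getElem.1 hch j.val (by omega)
      simpa [g, h] using this
    · apply hcl
      · simp only [g, Option.mem_def]
        rw [List.getLast?_eq_getElem?, List.getElem?_eq_getElem (by omega)]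
        simp only [show L.length - 1 = j.val by omega]
      · simp only [g, Option.mem_def]
        rw [List.head?_eq_getElem?, List.getElem?_eq_getElem (by omega)]
        simp only [h0]
  refine ⟨⟨fun x => Sum.elim (fun _ => v) g x, ?_⟩, ?_, ?_⟩
  · rintro (a | a) (b | b) h
    · simp [wheelGraph, graphJoin] at h
    · exact hadj _ (hgm _)
    · exact (hadj _ (hgm _)).symm
    · have h3 : (cycleGraph (2 * k + 1 - 1)).Adj a b := by
        simp only [wheelGraph, graphJoin, fromRel_adj] at h
        rcases h.2 with h | h
        · exact h
        · exact h.symm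
      rw [cycleGraph_adj'] at h3
      rcases h3 with h3 | h3
      · exact (key _ _ h3).symm
      · exact key _ _ h3
  · rintro (a | a) (b | b) h
    · rfl
    · exact absurd h (hadj _ (hgm _)).ne
    · exact absurd h (hadj _ (hgm _)).ne'
    · congr 1
      have h' : L[a.val]'(by have := a.isLt; omega) = L[b.val]'(by have := b.isLt; omega) := h
      rw [hnd.getElem_inj_iff] at h'
      exact Fin.ext h'
  · rintro (a | a)
    · exact hv
    · exact hX _ (hgm _)

/-- Interleaves `u₁, …, u_j` with the lists `s₁, …, s_j` into `u₁ s₁ u₂ s₂ … u_j s_j`. -/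
def weave {V : Type} : List V → List (List V) → List V
  | u :: us, s :: ss => u :: (s ++ weave us ss)
  | _, _ => []

/-- The vertices of `weave us ss` are those of `us` and of the lists in `ss`. -/
lemma weave_perm {V : Type} : ∀ (us : List V) (ss : List (List V)), us.length = ss.length →
    (weave us ss).Perm (us ++ ss.flatten)
  | [], [], _ => by simp [weave]
  | [], _ :: _, h => by simp at h
  | _ :: _, [], h => by simp at h
  | u :: us, s :: ss, h => by
    have ih := weave_perm us ss (by simpa using h)
    simp only [weave, List.cons_append, List.flatten_cons]
    refine List.Perm.cons _ ?_
    refine (ih.append_left s).trans ?_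
    rw [← List.append_assoc, ← List.append_assoc]
    exact (List.perm_append_comm).append_right _

lemma weave_head {V : Type} (us : List V) (ss : List (List V)) {x : V}
    (h : x ∈ (weave us ss).head?) : x ∈ us := by
  cases us with
  | nil => simp [weave] at h
  | cons u us =>
    cases ss with
    | nil => simp [weave] at h
    | cons s ss => simp [weave] at h; simp [h]

lemma weave_last {V : Type} : ∀ (us : List V) (ss : List (List V)), (∀ s ∈ ss, s ≠ []) →
    ∀ x ∈ (weave us ss).getLast?, x ∈ ss.flatten
  | [], _, _, x, h => by simp [weave] at h
  | _ :: _, [], _, x, h => by simp [weave] at h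
  | u :: us, s :: ss, hne, x, h => by
    have hs : s ≠ [] := hne s (by simp)
    have ih := weave_last us ss (fun t ht => hne t (by simp [ht])) x
    rw [weave, List.getLast?_cons_of_ne_nil (by simp [hs]), List.getLast?_append] at h
    rw [List.flatten_cons, List.mem_append]
    cases hw : (weave us ss).getLast? with
    | none =>
      rw [hw] at h
      left
      exact List.mem_of_getLast? (by simpa using h)
    | some y =>
      rw [hw] at h ih
      right
      apply ih
      simpa using h

lemma weave_chain {V : Type} {G : SimpleGraph V} : ∀ (us : List V) (ss : List (List V)),
    (∀ s ∈ ss, s ≠ [] ∧ s.IsChain G.Adj) → (∀ u ∈ us, ∀ b ∈ ss.flatten, G.Adj u b) →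
    (weave us ss).IsChain G.Adj
  | [], _, _, _ => by simp [weave]
  | _ :: _, [], _, _ => by simp [weave]
  | u :: us, s :: ss, h, ha => by
    have ih := weave_chain us ss (fun t ht => h t (by simp [ht]))
      (fun a haa b hb => ha a (by simp [haa]) b (by simp only [List.flatten_cons, List.mem_append]; exact Or.inr hb))
    obtain ⟨hs, hsc⟩ := h s (by simp)
    rw [weave, List.isChain_cons, List.isChain_append]
    refine ⟨?_, hsc, ih, ?_⟩
    · intro b hb
      apply ha u (by simp)
      have : b ∈ s := by
        rw [List.head?_append_of_ne_nil _ hs] at hb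
        exact List.mem_of_head? hb
      simp [this]
    · intro x hx y hy
      have h1 := weave_head us ss hy
      refine (ha y (by simp [h1]) x ?_).symm
      have := List.mem_of_getLast? hx
      simp [this]

/-! ### Wheels from a star and short paths -/

/-- Number of neighbours of `v` in `X`. -/
def dg {V : Type} (G : SimpleGraph V) [DecidableRel G.Adj] (X : Finset V) (v : V) : ℕ :=
  (X.filter (fun w => G.Adj v w)).card

/-- Number of non-neighbours of `v` in `X`. -/
def ms {V : Type} (G : SimpleGraph V) [DecidableRel G.Adj] (X : Finset V) (v : V) : ℕ :=
  (X.filter (fun w => ¬ G.Adj v w)).card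

/-- Number of vertices of `X` with at least `d` neighbours inside `X`. -/
def big {V : Type} (G : SimpleGraph V) [DecidableRel G.Adj] (X : Finset V) (d : ℕ) : ℕ :=
  (X.filter (fun w => d ≤ dg G X w)).card

/-- Two disjoint parts spanning no wheel, in which any `k + 1` vertices of one part have at least
`2k + 1` common neighbours in the other. -/
structure Good {V : Type} [DecidableEq V] (G : SimpleGraph V) [DecidableRel G.Adj] (k : ℕ)
    (A B : Finset V) : Prop where
  disj : Disjoint A B
  comA : ∀ S ⊆ A, S.card ≤ k + 1 → 2 * k + 1 ≤ (B.filter (fun w => ∀ v ∈ S, G.Adj v w)).card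
  comB : ∀ S ⊆ B, S.card ≤ k + 1 → 2 * k + 1 ≤ (A.filter (fun w => ∀ v ∈ S, G.Adj v w)).card
  nowheel : ¬ HasWheel G k (A ∪ B)

section
variable {V : Type} [DecidableEq V] {G : SimpleGraph V} [DecidableRel G.Adj] {k : ℕ}
  {A B : Finset V}

lemma Good.symm (h : Good G k A B) : Good G k B A :=
  ⟨h.disj.symm, h.comB, h.comA, by rw [Finset.union_comm]; exact h.nowheel⟩

/-- A star in `A` together with short paths (`segs`) in `B`, completely joined to it, closes up to a
wheel: the leaves of the star alternate around the rim with the paths and with further common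
neighbours of the star. -/
lemma wheel_of_segs (hd : Disjoint A B)
    (hcom : ∀ S ⊆ A, S.card ≤ k + 1 → 2 * k + 1 ≤ (B.filter (fun w => ∀ v ∈ S, G.Adj v w)).card)
    (v : V) (hv : v ∈ A) (us : List V)
    (hus : us.Nodup) (husA : ∀ u ∈ us, u ∈ A ∧ G.Adj v u) (segs : List (List V))
    (hseg : ∀ s ∈ segs, s ≠ [] ∧ s.IsChain G.Adj) (hnd : segs.flatten.Nodup)
    (hB : ∀ b ∈ segs.flatten, b ∈ B ∧ G.Adj v b ∧ ∀ u ∈ us, G.Adj u b)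
    (hle : segs.length ≤ us.length) (hk : us.length ≤ k)
    (htot : segs.flatten.length + 2 * us.length = 2 * k + segs.length) :
    HasWheel G k (A ∪ B) := by
  -- `S` supplies one-vertex paths between those leaves that are not separated by `segs`
  set T : Finset V := (v :: us).toFinset with hT
  have hTA : T ⊆ A := by
    intro x hx
    simp only [hT, List.mem_toFinset, List.mem_cons] at hx
    rcases hx with rfl | hx
    · exact hv
    · exact (husA x hx).1
  have hTc : T.card ≤ k + 1 := by
    refine (List.toFinset_card_le _).trans ?_
    simp; omega
  have hC := hcom T hTA hTc
  set C := B.filter (fun w => ∀ v ∈ T, G.Adj v w) with hCdef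
  have h1 : us.length - segs.length ≤ (C \ segs.flatten.toFinset).card := by
    have := Finset.le_card_sdiff segs.flatten.toFinset C
    have h2 := List.toFinset_card_le segs.flatten
    omega
  obtain ⟨S, hS, hSc⟩ := Finset.exists_subset_card_eq h1
  have hSm : ∀ x ∈ S, x ∈ B ∧ (∀ t ∈ T, G.Adj t x) ∧ x ∉ segs.flatten := by
    intro x hx
    have := hS hx
    simp only [Finset.mem_sdiff, hCdef, Finset.mem_filter, List.mem_toFinset] at this
    exact ⟨this.1.1, this.1.2, this.2⟩
  have hfl : (S.toList.map (fun x => [x])).flatten = S.toList := by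
    induction S.toList with
    | nil => rfl
    | cons a l ih => simp [ih]
  set segs' := segs ++ S.toList.map (fun x => [x]) with hs'
  have hfl' : segs'.flatten = segs.flatten ++ S.toList := by
    rw [hs', List.flatten_append, hfl]
  have hlen' : us.length = segs'.length := by
    simp [hs', hSc]; omega
  have hB' : ∀ b ∈ segs'.flatten, b ∈ B ∧ G.Adj v b ∧ ∀ u ∈ us, G.Adj u b := by
    intro b hb
    rw [hfl', List.mem_append] at hb
    rcases hb with hb | hb
    · exact hB b hb
    · have := hSm b (by simpa using hb)
      refine ⟨this.1, this.2.1 v (by simp [hT]), fun u hu => this.2.1 u (by simp [hT, hu])⟩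
  have hnd' : segs'.flatten.Nodup := by
    rw [hfl', List.nodup_append]
    refine ⟨hnd, S.nodup_toList, ?_⟩
    rintro a ha b hb rfl
    exact (hSm a (by simpa using hb)).2.2 ha
  have hseg' : ∀ s ∈ segs', s ≠ [] ∧ s.IsChain G.Adj := by
    intro s hs
    rw [hs', List.mem_append] at hs
    rcases hs with hs | hs
    · exact hseg s hs
    · simp only [List.mem_map] at hs
      obtain ⟨a, _, rfl⟩ := hs
      simp
  have hp := weave_perm us segs' hlen'
  refine hasWheel_of_list v (Finset.mem_union_left _ hv) (weave us segs') ?_ ?_ ?_ ?_ ?_ ?_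
  · rw [hp.length_eq, List.length_append, hfl', List.length_append, Finset.length_toList, hSc]
    omega
  · rw [hp.nodup_iff, List.nodup_append]
    refine ⟨hus, hnd', ?_⟩
    rintro a ha b hb rfl
    exact (Finset.disjoint_left.1 hd) (husA a ha).1 (hB' a hb).1
  · intro x hx
    rw [hp.mem_iff, List.mem_append] at hx
    rw [Finset.mem_union]
    rcases hx with hx | hx
    · exact Or.inl (husA x hx).1
    · exact Or.inr (hB' x hx).1
  · intro x hx
    rw [hp.mem_iff, List.mem_append] at hx
    rcases hx with hx | hx
    · exact (husA x hx).2
    · exact (hB' x hx).2.1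
  · exact weave_chain us segs' hseg' (fun u hu b hb => (hB' b hb).2.2 u hu)
  · intro x hx y hy
    exact ((hB' x (weave_last us segs' (fun s hs => (hseg' s hs).1) x hx)).2.2 y
      (weave_head us segs' hy)).symm

/-- With no wheel present, no part contains a star with `k` leaves. -/
lemma Good.deg (h : Good G k A B) : ∀ v ∈ A, dg G A v ≤ k - 1 := by
  intro v hv
  by_contra! hlt
  have h1 : k ≤ (A.filter (fun w => G.Adj v w)).card := by unfold dg at hlt; omega
  obtain ⟨S, hS, hSc⟩ := Finset.exists_subset_card_eq h1
  refine h.nowheel (wheel_of_segs h.disj h.comA v hv S.toList S.nodup_toList ?_ [] ?_ ?_ ?_ ?_ ?_ ?_)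
  · intro u hu
    have := hS (by simpa using hu : u ∈ S)
    simpa using this
  all_goals simp [hSc]

lemma big_anti {d e : ℕ} (h : d ≤ e) : big G A e ≤ big G A d := by
  unfold big
  apply Finset.card_le_card
  intro x hx
  simp only [Finset.mem_filter] at hx ⊢
  exact ⟨hx.1, h.trans hx.2⟩

/-- If many vertices of `B` have `d` neighbours in `B`, some star with `d` leaves in `B` avoids a
given small set `U` and is completely joined to a given small set `T`. -/
lemma find_star (hdeg : ∀ v ∈ B, dg G B v ≤ k - 1) (hk : 1 ≤ k) (T U : Finset V) (d : ℕ)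
    (h : k * (U.card + ∑ t ∈ T, ms G B t) < big G B d) :
    ∃ w ∈ B, w ∉ U ∧ (∀ t ∈ T, G.Adj t w) ∧ d ≤ dg G B w ∧ ∃ us : List V, us.Nodup ∧ us.length = d ∧
      ∀ u ∈ us, u ∈ B ∧ u ∉ U ∧ G.Adj w u ∧ ∀ t ∈ T, G.Adj t u := by
  -- `Z` collects the forbidden vertices of `B`; `w` is chosen outside `Z` and its neighborhood
  set Z : Finset V := (U ∩ B) ∪ T.biUnion (fun t => B.filter (fun w => ¬ G.Adj t w)) with hZ
  have hZc : Z.card ≤ U.card + ∑ t ∈ T, ms G B t := by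
    refine (Finset.card_union_le _ _).trans ?_
    exact Nat.add_le_add (Finset.card_le_card Finset.inter_subset_left) Finset.card_biUnion_le
  have hZB : Z ⊆ B := by
    intro x hx
    simp only [hZ, Finset.mem_union, Finset.mem_inter, Finset.mem_biUnion, Finset.mem_filter] at hx
    rcases hx with hx | ⟨t, _, hx⟩
    · exact hx.2
    · exact hx.1
  set Y : Finset V := Z ∪ Z.biUnion (fun z => B.filter (fun w => G.Adj z w)) with hY
  have hYc : Y.card ≤ k * Z.card := by
    refine (Finset.card_union_le _ _).trans ?_
    have : (Z.biUnion (fun z => B.filter (fun w => G.Adj z w))).card ≤ Z.card * (k - 1) :=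
      Finset.card_biUnion_le_card_mul _ _ _ (fun z hz => hdeg z (hZB hz))
    obtain ⟨k', rfl⟩ : ∃ k', k = k' + 1 := ⟨k - 1, by omega⟩
    simp only [Nat.add_sub_cancel] at this
    linarith
  have hlt : Y.card < (B.filter (fun w => d ≤ dg G B w)).card :=
    lt_of_le_of_lt (hYc.trans (Nat.mul_le_mul_left _ hZc)) h
  obtain ⟨w, hw, hwY⟩ := Finset.exists_mem_notMem_of_card_lt_card hlt
  rw [Finset.mem_filter] at hw
  have hgood : ∀ x ∈ B, x ∉ Z → x ∉ U ∧ ∀ t ∈ T, G.Adj t x := by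
    intro x hx hxZ
    simp only [hZ, Finset.mem_union, Finset.mem_inter, Finset.mem_biUnion, Finset.mem_filter,
      not_or, not_exists, not_and, not_not] at hxZ
    exact ⟨fun hu => hxZ.1 hu hx, fun t ht => hxZ.2 t ht hx⟩
  have hwZ : w ∉ Z := fun hz => hwY (Finset.mem_union_left _ hz)
  obtain ⟨S, hS, hSc⟩ := Finset.exists_subset_card_eq hw.2
  refine ⟨w, hw.1, (hgood w hw.1 hwZ).1, (hgood w hw.1 hwZ).2, hw.2, S.toList, S.nodup_toList,
    by simp [hSc], ?_⟩
  intro u hu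
  have hu' := hS (by simpa using hu : u ∈ S)
  rw [Finset.mem_filter] at hu'
  have huZ : u ∉ Z := by
    intro hz
    apply hwY
    rw [hY, Finset.mem_union, Finset.mem_biUnion]
    exact Or.inr ⟨u, hz, by rw [Finset.mem_filter]; exact ⟨hw.1, hu'.2.symm⟩⟩
  exact ⟨hu'.1, (hgood u hu'.1 huZ).1, hu'.2, (hgood u hu'.1 huZ).2⟩

/-- `segs` is a family of vertex-disjoint nonempty paths in `B`, completely joined to `T`. -/
structure Segs (G : SimpleGraph V) (T B : Finset V) (segs : List (List V)) : Prop where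
  chain : ∀ s ∈ segs, s ≠ [] ∧ s.IsChain G.Adj
  nodup : segs.flatten.Nodup
  mem : ∀ b ∈ segs.flatten, b ∈ B ∧ ∀ t ∈ T, G.Adj t b

lemma Segs.nil (T : Finset V) : Segs G T B [] := ⟨by simp, by simp, by simp⟩

lemma Segs.cons {T : Finset V} {segs : List (List V)} (h : Segs G T B segs) (s : List V)
    (hs : s ≠ []) (hc : s.IsChain G.Adj) (hn : s.Nodup)
    (hm : ∀ b ∈ s, b ∈ B ∧ b ∉ segs.flatten ∧ ∀ t ∈ T, G.Adj t b) : Segs G T B (s :: segs) := by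
  refine ⟨?_, ?_, ?_⟩
  · intro s' hs'
    rcases List.mem_cons.1 hs' with rfl | hs'
    · exact ⟨hs, hc⟩
    · exact h.chain s' hs'
  · rw [List.flatten_cons, List.nodup_append]
    refine ⟨hn, h.nodup, ?_⟩
    rintro a ha b hb rfl
    exact (hm a ha).2.1 hb
  · intro b hb
    rw [List.flatten_cons, List.mem_append] at hb
    rcases hb with hb | hb
    · exact ⟨(hm b hb).1, (hm b hb).2.2⟩
    · exact h.mem b hb

/-- Many vertices of positive degree allow a further edge, where `c` bounds the vertices used. -/
lemma Segs.extend2 (hdeg : ∀ v ∈ B, dg G B v ≤ k - 1) (hk : 1 ≤ k) {T : Finset V}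
    {segs : List (List V)} (h : Segs G T B segs) {c : ℕ} (hc : segs.flatten.length ≤ c)
    (hb : k * (c + ∑ t ∈ T, ms G B t) < big G B 1) :
    ∃ s, s.length = 2 ∧ Segs G T B (s :: segs) := by
  obtain ⟨w, hw, hwU, hwT, -, us, hus, hul, hu⟩ := find_star hdeg hk T segs.flatten.toFinset 1
    (lt_of_le_of_lt (Nat.mul_le_mul_left _ (Nat.add_le_add_right
      ((List.toFinset_card_le _).trans hc) _)) hb)
  obtain ⟨u, rfl⟩ := List.length_eq_one_iff.1 hul
  obtain ⟨h1, h2, h3, h4⟩ := hu u (by simp)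
  refine ⟨[w, u], rfl, h.cons _ (by simp) (by simp [h3]) (by simp [h3.ne]) ?_⟩
  intro b hb
  simp only [List.mem_cons, List.not_mem_nil, or_false] at hb
  rw [List.mem_toFinset] at hwU h2
  rcases hb with rfl | rfl
  · exact ⟨hw, hwU, hwT⟩
  · exact ⟨h1, h2, h4⟩

/-- Many vertices of degree at least two allow a further path on three vertices. -/
lemma Segs.extend3 (hdeg : ∀ v ∈ B, dg G B v ≤ k - 1) (hk : 1 ≤ k) {T : Finset V}
    {segs : List (List V)} (h : Segs G T B segs) {c : ℕ} (hc : segs.flatten.length ≤ c)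
    (hb : k * (c + ∑ t ∈ T, ms G B t) < big G B 2) :
    ∃ s, s.length = 3 ∧ Segs G T B (s :: segs) := by
  obtain ⟨w, hw, hwU, hwT, -, us, hus, hul, hu⟩ := find_star hdeg hk T segs.flatten.toFinset 2
    (lt_of_le_of_lt (Nat.mul_le_mul_left _ (Nat.add_le_add_right
      ((List.toFinset_card_le _).trans hc) _)) hb)
  obtain ⟨u, u', rfl⟩ := List.length_eq_two.1 hul
  obtain ⟨h1, h2, h3, h4⟩ := hu u (by simp)
  obtain ⟨h1', h2', h3', h4'⟩ := hu u' (by simp)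
  have hne : u ≠ u' := by simpa using hus
  refine ⟨[u, w, u'], rfl, h.cons _ (by simp) (by simp [h3.symm, h3']) (by simp [h3.ne', h3'.ne, hne]) ?_⟩
  intro b hb
  simp only [List.mem_cons, List.not_mem_nil, or_false] at hb
  rw [List.mem_toFinset] at hwU h2 h2'
  rcases hb with rfl | rfl | rfl
  · exact ⟨h1, h2, h4⟩
  · exact ⟨hw, hwU, hwT⟩
  · exact ⟨h1', h2', h4'⟩

lemma segs3 (hdeg : ∀ v ∈ B, dg G B v ≤ k - 1) (hk : 1 ≤ k) (T : Finset V) (r : ℕ)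
    (hb : k * (3 * r + ∑ t ∈ T, ms G B t) < big G B 2) :
    ∃ segs, segs.length = r ∧ segs.flatten.length = 3 * r ∧ Segs G T B segs := by
  induction r with
  | zero => exact ⟨[], rfl, rfl, Segs.nil T⟩
  | succ r ih =>
    obtain ⟨segs, h1, h2, h3⟩ := ih (lt_of_le_of_lt (Nat.mul_le_mul_left _ (by omega)) hb)
    obtain ⟨s, hs, hs'⟩ := h3.extend3 hdeg hk (c := 3 * (r + 1)) (by omega) hb
    exact ⟨s :: segs, by simp [h1], by rw [List.flatten_cons, List.length_append]; omega, hs'⟩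

/-- A star with `i` leaves in `A` excludes many vertices of degree at least `k - i` in `B`, when
`i = k - 1` or `2i ≥ k`: the rim uses two edges of `B`, or `k - i` paths on three vertices. -/
lemma Good.hub_first (h : Good G k A B) (hk : 3 ≤ k) (v : V) (hv : v ∈ A) (us : List V)
    (hus : us.Nodup) (husA : ∀ u ∈ us, u ∈ A ∧ G.Adj v u) (hi : us.length < k)
    (hcase : k - us.length = 1 ∨ k ≤ 2 * us.length) {M : ℕ}
    (hM : ∀ u ∈ v :: us, ms G B u ≤ M)
    (hb : k * (3 * k + k * M) < big G B (k - us.length)) : False := by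
  set T := (v :: us).toFinset with hT
  have hTs : ∑ t ∈ T, ms G B t ≤ k * M := by
    calc ∑ t ∈ T, ms G B t ≤ T.card • M :=
          Finset.sum_le_card_nsmul _ _ _ (fun t ht => hM t (by simpa [hT] using ht))
      _ ≤ k * M := by
        rw [smul_eq_mul]
        apply Nat.mul_le_mul_right
        refine (List.toFinset_card_le _).trans ?_
        simp; omega
  have hdeg := h.symm.deg
  have fin : ∀ segs, Segs G T B segs → segs.length ≤ us.length →
      segs.flatten.length + 2 * us.length = 2 * k + segs.length → False := by
    intro segs hs h1 h2
    refine h.nowheel (wheel_of_segs h.disj h.comA v hv us hus husA segs hs.chain hs.nodup ?_ h1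
      hi.le h2)
    intro b hb
    have := hs.mem b hb
    exact ⟨this.1, this.2 v (by simp [hT]), fun u hu => this.2 u (by simp [hT, hu])⟩
  by_cases h1 : k - us.length = 1
  · rw [h1] at hb
    have hb' : k * (4 + ∑ t ∈ T, ms G B t) < big G B 1 :=
      lt_of_le_of_lt (Nat.mul_le_mul_left _ (by omega)) hb
    obtain ⟨s, hs, hs'⟩ := (Segs.nil (G := G) (B := B) T).extend2 hdeg (by omega) (c := 4) (by simp) hb'
    obtain ⟨t, ht, ht'⟩ := hs'.extend2 hdeg (by omega) (c := 4) (by simp [hs]) hb'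
    refine fin _ ht' ?_ ?_
    · simp; omega
    · simp [hs, ht]; omega
  · have h2 : k ≤ 2 * us.length := by omega
    have hb' : k * (3 * (k - us.length) + ∑ t ∈ T, ms G B t) < big G B 2 :=
      lt_of_le_of_lt (Nat.mul_le_mul_left _ (by omega))
        (hb.trans_le (big_anti (by omega)))
    obtain ⟨segs, hs1, hs2, hs3⟩ := segs3 hdeg (by omega) T _ hb'
    refine fin _ hs3 ?_ ?_
    · omega
    · omega

/-- Short paths in `A` exclude many stars in `B`: one of these stars is completely joined to the
paths, and closes up with them to a wheel. -/
lemma Good.segs_first (h : Good G k A B) (hk : 3 ≤ k) (segs : List (List V))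
    (hs : Segs G ∅ A segs) (j : ℕ) (hj : j ≤ k) (hle : segs.length ≤ j)
    (htot : segs.flatten.length + 2 * j = 2 * k + segs.length) {M : ℕ}
    (hM : ∀ u ∈ A, ms G B u ≤ M) (hb : k * (2 * k * M) < big G B j) : False := by
  set T := segs.flatten.toFinset with hT
  have hTs : ∑ t ∈ T, ms G B t ≤ 2 * k * M := by
    calc ∑ t ∈ T, ms G B t ≤ T.card • M :=
          Finset.sum_le_card_nsmul _ _ _
            (fun t ht => hM t (hs.mem t (by simpa only [hT, List.mem_toFinset] using ht)).1)
      _ ≤ 2 * k * M := by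
        rw [smul_eq_mul]
        apply Nat.mul_le_mul_right
        refine (List.toFinset_card_le _).trans ?_
        omega
  obtain ⟨w, hw, -, hwT, -, us, hus, hul, hu⟩ := find_star h.symm.deg (by omega) T ∅ j
    (lt_of_le_of_lt (Nat.mul_le_mul_left _ (by simpa using hTs)) hb)
  have hh := h.symm
  refine hh.nowheel (wheel_of_segs hh.disj hh.comA w hw us hus
    (fun u huu => ⟨(hu u huu).1, (hu u huu).2.2.1⟩) segs hs.chain hs.nodup ?_ (by omega) (by omega)
    (by omega))
  intro b hb
  have hbT : b ∈ T := by rw [hT, List.mem_toFinset]; exact hb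
  exact ⟨(hs.mem b hb).1, (hwT b hbT).symm, fun u huu => ((hu u huu).2.2.2 b hbT).symm⟩

end

/-! ### The core inequality -/

section
variable {V : Type} [DecidableEq V] {G : SimpleGraph V} [DecidableRel G.Adj] {k : ℕ}
  {A B : Finset V}

/-- A sum of degrees, each at most `k - 1`, by layers. -/
lemma sum_dg (hdeg : ∀ v ∈ A, dg G A v ≤ k - 1) :
    ∑ v ∈ A, dg G A v = ∑ i ∈ Finset.Icc 1 (k - 1), big G A i := by
  have h1 : ∀ v ∈ A, dg G A v = ∑ i ∈ Finset.Icc 1 (k - 1), if i ≤ dg G A v then 1 else 0 := by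
    intro v hv
    rw [← Finset.card_filter]
    have : (Finset.Icc 1 (k - 1)).filter (fun i => i ≤ dg G A v) = Finset.Icc 1 (dg G A v) := by
      ext i
      have := hdeg v hv
      simp only [Finset.mem_filter, Finset.mem_Icc]
      omega
    rw [this, Nat.card_Icc]
    omega
  rw [Finset.sum_congr rfl h1, Finset.sum_comm]
  refine Finset.sum_congr rfl (fun i _ => ?_)
  rw [← Finset.card_filter]
  rfl

lemma exists_star {v : V} {d : ℕ} (h : d ≤ dg G A v) :
    ∃ us : List V, us.Nodup ∧ us.length = d ∧ ∀ u ∈ us, u ∈ A ∧ G.Adj v u := by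
  obtain ⟨S, hS, hSc⟩ := Finset.exists_subset_card_eq h
  refine ⟨S.toList, S.nodup_toList, by simp [hSc], ?_⟩
  intro u hu
  have := hS (by simpa using hu : u ∈ S)
  simpa using this

lemma exists_of_big {d : ℕ} (h : 1 ≤ big G A d) : ∃ v ∈ A, d ≤ dg G A v := by
  obtain ⟨v, hv⟩ := Finset.card_pos.1 (show 0 < (A.filter (fun w => d ≤ dg G A w)).card from h)
  rw [Finset.mem_filter] at hv
  exact ⟨v, hv⟩

lemma exists_P3 (h : 1 ≤ big G A 2) : ∃ s : List V, s.length = 3 ∧ Segs G ∅ A [s] := by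
  obtain ⟨v, hv, hd⟩ := exists_of_big h
  obtain ⟨us, hn, hl, hu⟩ := exists_star hd
  obtain ⟨u, u', rfl⟩ := List.length_eq_two.1 hl
  obtain ⟨h1, h2⟩ := hu u (by simp)
  obtain ⟨h1', h2'⟩ := hu u' (by simp)
  have hne : u ≠ u' := by simpa using hn
  refine ⟨[u, v, u'], rfl, (Segs.nil ∅).cons _ (by simp) (by simp [h2.symm, h2'])
    (by simp [h2.ne', h2'.ne, hne]) ?_⟩
  intro b hb
  simp only [List.mem_cons, List.not_mem_nil, or_false] at hb
  rcases hb with rfl | rfl | rfl <;> simp [*]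

/-- Degrees at most `1` with degree sum at least `3` give two disjoint edges. -/
lemma exists_2P2 (h2 : big G A 2 = 0) (hsum : 3 ≤ ∑ v ∈ A, dg G A v) :
    ∃ s t : List V, s.length = 2 ∧ t.length = 2 ∧ Segs G ∅ A [t, s] := by
  have hle : ∀ v ∈ A, dg G A v ≤ 1 := by
    intro v hv
    by_contra! hlt
    have : v ∈ A.filter (fun w => 2 ≤ dg G A w) := by
      rw [Finset.mem_filter]; exact ⟨hv, hlt⟩
    rw [big, Finset.card_eq_zero] at h2
    rw [h2] at this
    simp at this
  have huniq : ∀ v ∈ A, ∀ x ∈ A, ∀ y ∈ A, G.Adj v x → G.Adj v y → x = y := by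
    intro v hv x hx y hy hvx hvy
    have := hle v hv
    rw [dg, Finset.card_le_one] at this
    exact this x (by simp [hx, hvx]) y (by simp [hy, hvy])
  have hnb : ∀ v, 1 ≤ dg G A v → ∃ u ∈ A, G.Adj v u := by
    intro v hv
    obtain ⟨us, hn, hl, hu⟩ := exists_star hv
    obtain ⟨u, rfl⟩ := List.length_eq_one_iff.1 hl
    exact ⟨u, hu u (by simp)⟩
  set S := A.filter (fun v => 1 ≤ dg G A v) with hS
  have hSc : 3 ≤ S.card := by
    rw [hS, Finset.card_filter]
    refine hsum.trans (Finset.sum_le_sum fun v hv => ?_)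
    have := hle v hv
    split_ifs <;> omega
  obtain ⟨v, hv⟩ := Finset.card_pos.1 (show 0 < S.card by omega)
  rw [hS, Finset.mem_filter] at hv
  obtain ⟨u, hu, huv⟩ := hnb v hv.2
  have h3 : ({v, u} : Finset V).card < S.card := lt_of_le_of_lt Finset.card_le_two (by omega)
  obtain ⟨v', hv', hn'⟩ := Finset.exists_mem_notMem_of_card_lt_card h3
  rw [hS, Finset.mem_filter] at hv'
  obtain ⟨u', hu', huv'⟩ := hnb v' hv'.2
  simp only [Finset.mem_insert, Finset.mem_singleton, not_or] at hn'
  have e1 : u' ≠ v := by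
    rintro rfl
    exact hn'.2 (huniq u' hu' _ hv'.1 _ hu huv'.symm huv)
  have e2 : u' ≠ u := by
    rintro rfl
    exact hn'.1 (huniq u' hu' _ hv'.1 _ hv.1 huv'.symm huv.symm)
  refine ⟨[v, u], [v', u'], rfl, rfl, ((Segs.nil ∅).cons [v, u] (by simp) (by simp [huv])
    (by simp [huv.ne]) ?_).cons _ (by simp) (by simp [huv']) (by simp [huv'.ne]) ?_⟩
  · intro b hb
    simp only [List.mem_cons, List.not_mem_nil, or_false] at hb
    rcases hb with rfl | rfl <;> simp [*]
  · intro b hb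
    simp only [List.mem_cons, List.not_mem_nil, or_false] at hb
    rcases hb with rfl | rfl <;> simp [*]

/-- The near-extremal configurations. All vertices of `A` miss few vertices of `B`, and for every
`l` either `A` has many vertices of degree `l` or `B` has many of degree `k - l`. Then a single
excess vertex of degree `i` in `A`, next to many vertices of degree `k - i` in `B`, is impossible
once `A` spans at least two edges. -/
lemma Good.stage2 (h : Good G k A B) (hk : 3 ≤ k) {M L : ℕ} (hM : ∀ u ∈ A, ms G B u ≤ M)
    (hL : k * (3 * k + 2 * k * M) < L)
    (hdich : ∀ l, 1 ≤ l → l ≤ k - 1 → L ≤ big G A l ∨ L ≤ big G B (k - l))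
    (i : ℕ) (hi1 : 1 ≤ i) (hi2 : i ≤ k - 1) (hβ : L ≤ big G B (k - i)) (hα : 1 ≤ big G A i)
    (hsum : 3 ≤ ∑ v ∈ A, dg G A v) : False := by
  have hdeg := h.deg
  have hL1 : k * (3 * k + k * M) < L :=
    lt_of_le_of_lt (Nat.mul_le_mul_left _ (by nlinarith)) hL
  have hL2 : k * (2 * k * M) < L :=
    lt_of_le_of_lt (Nat.mul_le_mul_left _ (by omega)) hL
  have hL3 : ∀ c, c ≤ 3 * k → k * (c + ∑ t ∈ (∅ : Finset V), ms G A t) < L := fun c hc =>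
    lt_of_le_of_lt (Nat.mul_le_mul_left _ (by simp; omega)) hL
  by_cases hcase : k - i = 1 ∨ k ≤ 2 * i
  · obtain ⟨v, hv, hd⟩ := exists_of_big hα
    obtain ⟨us, hn, hl, hu⟩ := exists_star hd
    subst hl
    refine h.hub_first hk v hv us hn hu (by omega) hcase (M := M) ?_ (hL1.trans_le hβ)
    intro u huu
    rcases List.mem_cons.1 huu with rfl | huu
    · exact hM _ hv
    · exact hM _ (hu u huu).1
  · -- now `i < k / 2`, and the hubs are the many vertices of degree `k - i > k / 2` in `B`
    push Not at hcase
    rcases hdich 2 (by omega) (by omega) with h2 | h2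
    · obtain ⟨segs, hs1, hs2, hs3⟩ := segs3 hdeg (by omega) ∅ i ((hL3 _ (by omega)).trans_le h2)
      exact h.segs_first hk segs hs3 (k - i) (by omega) (by omega) (by omega) hM (hL2.trans_le hβ)
    · by_cases hi : 2 ≤ i
      · obtain ⟨s, hs, hs'⟩ := exists_P3 (hα.trans (big_anti hi))
        rcases hdich 1 (by omega) (by omega) with h1 | h1
        · have hb := (hL3 7 (by omega)).trans_le h1
          obtain ⟨t, ht, ht'⟩ := hs'.extend2 hdeg (by omega) (c := 7) (by simp [hs]) hb
          obtain ⟨t', htt, htt'⟩ := ht'.extend2 hdeg (by omega) (c := 7) (by simp [hs, ht]) hb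
          exact h.segs_first hk _ htt' (k - 2) (by omega) (by simp; omega)
            (by simp [hs, ht, htt]; omega) hM (hL2.trans_le h2)
        · exact h.segs_first hk _ hs' (k - 1) (by omega) (by simp; omega)
            (by simp [hs]; omega) hM (hL2.trans_le h1)
      · have hi' : i = 1 := by omega
        subst hi'
        by_cases h0 : 1 ≤ big G A 2
        · obtain ⟨s, hs, hs'⟩ := exists_P3 h0
          exact h.segs_first hk _ hs' (k - 1) (by omega) (by simp; omega)
            (by simp [hs]; omega) hM (hL2.trans_le hβ)
        · obtain ⟨s, t, hs, ht, hst⟩ := exists_2P2 (by omega) hsum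
          exact h.segs_first hk _ hst (k - 1) (by omega) (by simp; omega)
            (by simp [hs, ht]; omega) hM (hL2.trans_le hβ)

/-- Linearly many vertices of degree `i ≥ k / 2` in `A` exclude linearly many vertices of degree
`k - i` in `B`, when only linearly many cross pairs are missing: some star in `A` has only vertices
that miss boundedly many vertices of `B`. -/
lemma Good.stage1 (h : Good G k A B) (hk : 3 ≤ k) {E p : ℕ}
    (hp : E * (k * (3 * k + k * (2 * E * k ^ 2))) < p)
    (hμ : ∑ v ∈ A, ms G B v ≤ k * p) {i : ℕ} (hi1 : k ≤ 2 * i) (hi2 : i ≤ k - 1)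
    (hα : p ≤ E * big G A i) (hβ : p ≤ E * big G B (k - i)) : False := by
  have hE : 0 < E := by
    rcases Nat.eq_zero_or_pos E with rfl | hE
    · simp at hα; omega
    · exact hE
  set K := 2 * E * k ^ 2 with hK
  set Z := A.filter (fun v => K < ms G B v) with hZ
  have hZc : K * Z.card ≤ k * p := by
    refine le_trans ?_ hμ
    calc K * Z.card = ∑ v ∈ Z, K := by simp [mul_comm]
      _ ≤ ∑ v ∈ Z, ms G B v := Finset.sum_le_sum (fun v hv => by
          rw [hZ, Finset.mem_filter] at hv; exact hv.2.le)
      _ ≤ ∑ v ∈ A, ms G B v := Finset.sum_le_sum_of_subset (Finset.filter_subset _ _)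
  have hZ2 : 2 * E * k * Z.card ≤ p := by
    have : k * (2 * E * k * Z.card) ≤ k * p := by
      calc k * (2 * E * k * Z.card) = K * Z.card := by rw [hK]; ring
        _ ≤ k * p := hZc
    exact Nat.le_of_mul_le_mul_left this (by omega)
  have hlt : k * (Z.card + ∑ t ∈ (∅ : Finset V), ms G A t) < big G A i := by
    simp only [Finset.sum_empty, add_zero]
    by_contra! hcon
    have : E * big G A i ≤ E * (k * Z.card) := Nat.mul_le_mul_left _ hcon
    nlinarith
  obtain ⟨w, hw, hwU, -, -, us, hus, hul, hu⟩ := find_star h.deg (by omega) ∅ Z i hlt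
  have hgood : ∀ x ∈ A, x ∉ Z → ms G B x ≤ K := by
    intro x hx hxZ
    simp only [hZ, Finset.mem_filter, not_and, not_lt] at hxZ
    exact hxZ hx
  subst hul
  refine h.hub_first hk w hw us hus (fun u huu => ⟨(hu u huu).1, (hu u huu).2.2.1⟩) (by omega)
    (Or.inr hi1) (M := K) ?_ ?_
  · intro u huu
    rcases List.mem_cons.1 huu with rfl | huu
    · exact hgood _ hw hwU
    · exact hgood _ (hu u huu).1 (hu u huu).2.1
  · by_contra! hcon
    have := Nat.mul_le_mul_left E hcon
    omega

lemma sum_ms_comm : ∑ v ∈ A, ms G B v = ∑ w ∈ B, ms G A w := by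
  have : ∀ X : Finset V, ∀ v, ms G X v = ∑ w ∈ X, if ¬ G.Adj v w then 1 else 0 :=
    fun X v => Finset.card_filter _ _
  simp only [this]
  rw [Finset.sum_comm]
  simp only [G.adj_comm]

/-- In a wheel-free pair of parts of sizes `p ≥ q`, the edges inside the parts exceed the missing
cross pairs by at most `(k - 1) p / 2 + 1`. -/
lemma Good.core (h : Good G k A B) (hk : 3 ≤ k) (hBA : B.card ≤ A.card) {E : ℕ}
    (hE : E = 100 * k ^ 3) (hp : E * (k * (3 * k + k * (2 * E * k ^ 2))) < A.card) :
    ∑ v ∈ A, dg G A v + ∑ w ∈ B, dg G B w ≤ (k - 1) * A.card + 2 + 2 * ∑ v ∈ A, ms G B v := by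
  set p := A.card with hpdef
  set μ := ∑ v ∈ A, ms G B v with hμ
  by_contra! hcon
  have hα : ∀ i, big G A i ≤ p := fun i => Finset.card_filter_le _ _
  have hβ : ∀ i, big G B i ≤ p := fun i => (Finset.card_filter_le _ _).trans hBA
  have hdA : ∑ v ∈ A, dg G A v ≤ (k - 1) * p := by
    rw [mul_comm]
    exact Finset.sum_le_card_nsmul _ _ _ h.deg
  have hdB : ∑ v ∈ B, dg G B v ≤ (k - 1) * p := by
    refine (Finset.sum_le_card_nsmul _ _ _ h.symm.deg).trans ?_
    rw [smul_eq_mul, mul_comm]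
    exact Nat.mul_le_mul_left _ hBA
  have hμ1 : μ ≤ k * p := by
    have : (k - 1) * p ≤ k * p := Nat.mul_le_mul_right _ (by omega)
    omega
  have hμ1' : ∑ w ∈ B, ms G A w ≤ k * p := by rw [← sum_ms_comm]; exact hμ1
  set s : ℕ → ℕ := fun i => big G A i + big G B (k - i) with hs
  have hrefl : ∑ i ∈ Finset.Icc 1 (k - 1), big G B i = ∑ i ∈ Finset.Icc 1 (k - 1), big G B (k - i) := by
    refine Finset.sum_nbij' (fun i => k - i) (fun i => k - i) ?_ ?_ ?_ ?_ ?_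
    · intro i hi; simp only [Finset.mem_Icc] at hi ⊢; omega
    · intro i hi; simp only [Finset.mem_Icc] at hi ⊢; omega
    · intro i hi; simp only [Finset.mem_Icc] at hi ⊢; omega
    · intro i hi; simp only [Finset.mem_Icc] at hi ⊢; omega
    · intro i hi
      simp only [Finset.mem_Icc] at hi
      rw [show k - (k - i) = i by omega]
  have hsum : ∑ v ∈ A, dg G A v + ∑ w ∈ B, dg G B w = ∑ i ∈ Finset.Icc 1 (k - 1), s i := by
    rw [sum_dg h.deg, sum_dg h.symm.deg, hrefl, ← Finset.sum_add_distrib]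
  rw [hsum] at hcon
  -- the degrees `i` in `A` and `k - i` in `B` are not both frequent
  have hnot : ∀ i ∈ Finset.Icc 1 (k - 1), E * s i ≤ (E + 1) * p := by
    intro i hi
    rw [Finset.mem_Icc] at hi
    have h1 := Nat.mul_le_mul_left E (hα i)
    have h2 := Nat.mul_le_mul_left E (hβ (k - i))
    by_contra! hlt
    have hexp : E * s i = E * big G A i + E * big G B (k - i) := by rw [hs]; ring
    have hexp2 : (E + 1) * p = E * p + p := by ring
    rw [hexp, hexp2] at hlt
    rcases le_total k (2 * i) with hki | hki
    · exact h.stage1 hk hp hμ1 hki hi.2 (by omega) (by omega)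
    · refine h.symm.stage1 hk hp hμ1' (i := k - i) (by omega) (by omega) (by omega) ?_
      rw [show k - (k - i) = i by omega]
      omega
  -- the other summands being at most `(1 + 1 / E) p`, each `s i` is almost `p` or more
  have hlow : ∀ i ∈ Finset.Icc 1 (k - 1), E * p + 2 * E * μ ≤ E * s i + k * p := by
    intro i hi
    have h1 : ∑ l ∈ (Finset.Icc 1 (k - 1)).erase i, E * s l ≤ (k - 2) * ((E + 1) * p) := by
      refine (Finset.sum_le_card_nsmul _ _ ((E + 1) * p)
        (fun l hl => hnot l (Finset.mem_of_mem_erase hl))).trans ?_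
      rw [Finset.card_erase_of_mem hi, Nat.card_Icc, smul_eq_mul]
      exact Nat.mul_le_mul_right _ (by omega)
    rw [← Finset.mul_sum] at h1
    have h2 := Finset.add_sum_erase _ s hi
    have h3 := Nat.mul_le_mul_left E hcon.le
    rw [← h2] at h3
    obtain ⟨k', rfl⟩ : ∃ k', k = k' + 2 := ⟨k - 2, by omega⟩
    simp only [Nat.add_sub_cancel, show k' + 2 - 1 = k' + 1 by omega] at h1 h3 ⊢
    nlinarith
  have hk3 : 27 ≤ k ^ 3 := Nat.pow_le_pow_left hk 3
  have hkk : k ≤ k ^ 3 := Nat.le_self_pow (by norm_num) k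
  have hp0 : 0 < p := by omega
  have hμ2 : 2 * E * μ ≤ (k + 1) * p := by
    have h1 := hlow 1 (by rw [Finset.mem_Icc]; omega)
    have h2 := hnot 1 (by rw [Finset.mem_Icc]; omega)
    nlinarith
  have hL : k * (3 * k + 2 * k * μ) < p / 4 := by
    have h4 : 2 * k ^ 2 * (k + 1) ≤ 4 * k ^ 3 := by nlinarith [Nat.zero_le (k ^ 2)]
    have h5 : k ^ 3 * (50 * (k * (2 * k * μ))) ≤ k ^ 3 * p := by
      have h6 := Nat.mul_le_mul_left (2 * k ^ 2) hμ2
      have h7 := Nat.mul_le_mul_right p h4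
      rw [hE] at h6
      nlinarith
    have h6 : 50 * (k * (2 * k * μ)) ≤ p := Nat.le_of_mul_le_mul_left h5 (by omega)
    have h7 : 100 * (k * (3 * k)) < p := by
      refine lt_of_le_of_lt ?_ hp
      exact Nat.mul_le_mul (by omega) (Nat.mul_le_mul_left _ (by omega))
    have h8 : 0 < k * (3 * k) := by positivity
    rw [Nat.mul_add]
    omega
  have hdich : ∀ l, 1 ≤ l → l ≤ k - 1 → p / 4 ≤ big G A l ∨ p / 4 ≤ big G B (k - l) := by
    intro l hl1 hl2
    by_contra! hlt
    have h1 := hlow l (by rw [Finset.mem_Icc]; omega)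
    have h2 : 2 * s l ≤ p := by simp only [hs]; omega
    have h3 : 2 * k < E := by omega
    nlinarith
  -- an excess pair, where one of the two numbers is at least `p / 4` and the other is positive
  obtain ⟨i, hi, hip⟩ : ∃ i ∈ Finset.Icc 1 (k - 1), p < s i := by
    by_contra! hle
    have : ∑ i ∈ Finset.Icc 1 (k - 1), s i ≤ _ := Finset.sum_le_card_nsmul _ _ p hle
    rw [Nat.card_Icc, smul_eq_mul, Nat.add_sub_cancel] at this
    omega
  rw [Finset.mem_Icc] at hi
  have h1 := hα i
  have h2 := hβ (k - i)
  simp only [hs] at hip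
  have hMA : ∀ u ∈ A, ms G B u ≤ μ := fun u hu =>
    Finset.single_le_sum (f := fun v => ms G B v) (fun _ _ => Nat.zero_le _) hu
  have hMB : ∀ u ∈ B, ms G A u ≤ μ := fun u hu => by
    rw [hμ, sum_ms_comm]
    exact Finset.single_le_sum (f := fun v => ms G A v) (fun _ _ => Nat.zero_le _) hu
  rcases le_total (p / 4) (big G B (k - i)) with hb | hb
  · exact h.stage2 hk hMA hL hdich i hi.1 hi.2 hb (by omega) (by omega)
  · refine h.symm.stage2 hk hMB hL ?_ (k - i) (by omega) (by omega) ?_ (by omega) (by omega)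
    · intro l hl1 hl2
      have := hdich (k - l) (by omega) (by omega)
      rw [show k - (k - l) = l by omega] at this
      exact this.symm
    · rw [show k - (k - i) = i by omega]
      omega

end

/-! ### Disjoint wheels and vertices of large degree -/

section
variable {V : Type} [DecidableEq V] {G : SimpleGraph V} [DecidableRel G.Adj] {k : ℕ}
  {A B : Finset V}

lemma HasWheel.shrink {X : Finset V} (h : HasWheel G k X) :
    ∃ T ⊆ X, HasWheel G k T ∧ T.card ≤ 2 * k + 1 := by
  obtain ⟨f, hf, hX⟩ := h
  refine ⟨Finset.univ.image f, ?_, ⟨f, hf, fun x => by simp⟩, ?_⟩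
  · intro y hy
    obtain ⟨x, -, rfl⟩ := Finset.mem_image.1 hy
    exact hX x
  · refine Finset.card_image_le.trans ?_
    simp
    omega

lemma HasWheel.nonempty {X : Finset V} (h : HasWheel G k X) : X.Nonempty := by
  obtain ⟨f, -, hX⟩ := h
  exact ⟨_, hX (Sum.inl ())⟩

lemma HasWheel.mono {X Y : Finset V} (h : HasWheel G k X) (hXY : X ⊆ Y) : HasWheel G k Y := by
  obtain ⟨f, hf, hX⟩ := h
  exact ⟨f, hf, fun x => hXY (hX x)⟩

/-- `P` is a family of pairwise disjoint sets of at most `2k + 1` vertices, each containing a wheel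
and avoiding `H`. -/
structure IsPack (G : SimpleGraph V) (k : ℕ) (P : Finset (Finset V)) (H : Finset V) : Prop where
  pair : (P : Set (Finset V)).PairwiseDisjoint id
  wheel : ∀ T ∈ P, HasWheel G k T
  card : ∀ T ∈ P, T.card ≤ 2 * k + 1
  avoid : ∀ T ∈ P, Disjoint T H

lemma IsPack.insert {P : Finset (Finset V)} {H X : Finset V} (h : IsPack G k P H)
    (hH : Disjoint X H) (hP : Disjoint X (P.biUnion id)) (hX : HasWheel G k X) :
    ∃ P' : Finset (Finset V), P'.card = P.card + 1 ∧ IsPack G k P' H := by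
  obtain ⟨T, hTX, hT, hTc⟩ := hX.shrink
  have hdis : ∀ S ∈ P, Disjoint T S := fun S hS =>
    Disjoint.mono hTX (Finset.subset_biUnion_of_mem id hS) hP
  have hn : T ∉ P := by
    intro hTP
    have := hdis T hTP
    rw [disjoint_self] at this
    exact hT.nonempty.ne_empty this
  refine ⟨Insert.insert T P, Finset.card_insert_of_notMem hn, ?_, ?_, ?_, ?_⟩
  · rw [Finset.coe_insert]
    exact h.pair.insert (fun S hS _ => hdis S hS)
  · intro S hS
    rcases Finset.mem_insert.1 hS with rfl | hS
    · exact hT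
    · exact h.wheel S hS
  · intro S hS
    rcases Finset.mem_insert.1 hS with rfl | hS
    · exact hTc
    · exact h.card S hS
  · intro S hS
    rcases Finset.mem_insert.1 hS with rfl | hS
    · exact Disjoint.mono_left hTX hH
    · exact h.avoid S hS

lemma IsPack.card_biUnion {P : Finset (Finset V)} {H : Finset V} (h : IsPack G k P H) :
    (P.biUnion id).card ≤ P.card * (2 * k + 1) :=
  Finset.card_biUnion_le_card_mul _ _ _ h.card

lemma IsPack.contains {P : Finset (Finset V)} {H : Finset V} (h : IsPack G k P H) :
    Contains G (disjointCopies P.card (wheelGraph (2 * k + 1))) := by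
  choose f hf hX using h.wheel
  let e : Fin P.card ≃ P := P.equivFin.symm
  refine ⟨⟨fun x => f (e x.1).1 (e x.1).2 x.2, ?_⟩, ?_⟩
  · rintro ⟨i, a⟩ ⟨j, b⟩ hab
    simp only [disjointCopies, fromRel_adj] at hab
    rcases hab.2 with ⟨rfl, h2⟩ | ⟨rfl, h2⟩
    · exact (f _ _).map_adj h2
    · exact (f _ _).map_adj h2.symm
  · rintro ⟨i, a⟩ ⟨j, b⟩ hab
    have hab' : f (e i).1 (e i).2 a = f (e j).1 (e j).2 b := hab
    have hij : i = j := by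
      by_contra hne
      have hne' : (e i).1 ≠ (e j).1 := fun hh => hne (e.injective (Subtype.ext hh))
      have hd : Disjoint (e i).1 (e j).1 := h.pair (e i).2 (e j).2 hne'
      exact Finset.disjoint_left.1 hd (hX _ (e i).2 a) (by rw [hab']; exact hX _ (e j).2 b)
    subst hij
    rw [hf _ _ hab']

/-- Every set of at most `m (k + 1)` vertices of `A` has at least `m (2k + 1)` common neighbors
in `B`. -/
def Com (G : SimpleGraph V) [DecidableRel G.Adj] (k m : ℕ) (A B : Finset V) : Prop :=
  ∀ S ⊆ A, S.card ≤ m * (k + 1) →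
    m * (2 * k + 1) ≤ (B.filter (fun w => ∀ v ∈ S, G.Adj v w)).card

lemma com_sdiff {m : ℕ} (hm : 1 ≤ m)
    (hcom : Com G k m A B)
    {F : Finset V} (hF : F.card ≤ (m - 1) * (2 * k + 1)) :
    ∀ S ⊆ A \ F, S.card ≤ k + 1 →
      2 * k + 1 ≤ ((B \ F).filter (fun w => ∀ v ∈ S, G.Adj v w)).card := by
  intro S hS hSc
  have h1 := hcom S (hS.trans Finset.sdiff_subset) (hSc.trans (Nat.le_mul_of_pos_left _ hm))
  have h2 : B.filter (fun w => ∀ v ∈ S, G.Adj v w) \ F =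
      (B \ F).filter (fun w => ∀ v ∈ S, G.Adj v w) := by
    ext x
    simp only [Finset.mem_sdiff, Finset.mem_filter]
    tauto
  have h3 := Finset.le_card_sdiff F (B.filter (fun w => ∀ v ∈ S, G.Adj v w))
  rw [h2] at h3
  obtain ⟨m', rfl⟩ : ∃ m', m = m' + 1 := ⟨m - 1, by omega⟩
  rw [Nat.add_sub_cancel] at hF
  rw [Nat.add_mul] at h1
  omega

/-- A vertex of large degree within its part is the hub of a wheel avoiding a given small set. -/
lemma hub_wheel {m : ℕ} (hm : 1 ≤ m) (hd : Disjoint A B)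
    (hcom : Com G k m A B)
    {F : Finset V} (hF : F.card ≤ (m - 1) * (2 * k + 1)) {x : V} (hx : x ∈ A) (hxF : x ∉ F)
    (hdeg : F.card + k ≤ dg G A x) : HasWheel G k ((A \ F) ∪ (B \ F)) := by
  have h1 : k ≤ (A.filter (fun w => G.Adj x w) \ F).card := by
    have := Finset.le_card_sdiff F (A.filter (fun w => G.Adj x w))
    unfold dg at hdeg
    omega
  obtain ⟨S, hS, hSc⟩ := Finset.exists_subset_card_eq h1
  refine wheel_of_segs (Disjoint.mono Finset.sdiff_subset Finset.sdiff_subset hd)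
    (com_sdiff hm hcom hF) x (by simp [hx, hxF]) S.toList S.nodup_toList ?_ [] ?_ ?_ ?_ ?_ ?_ ?_
  · intro u hu
    have := hS (by simpa using hu : u ∈ S)
    simp only [Finset.mem_sdiff, Finset.mem_filter] at this ⊢
    exact ⟨⟨this.1.1, this.2⟩, this.1.2⟩
  all_goals simp [hSc]

/-- Vertices of large degree within their part, avoided by a family of disjoint wheels, are hubs of
further disjoint wheels. -/
lemma IsPack.absorb {m : ℕ} (hm : 1 ≤ m) (hd : Disjoint A B)
    (hcomA : Com G k m A B)
    (hcomB : Com G k m B A)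
    (H : Finset V) (hH : ∀ x ∈ H, (x ∈ A ∧ m * (2 * k + 1) + k ≤ dg G A x) ∨
      (x ∈ B ∧ m * (2 * k + 1) + k ≤ dg G B x)) :
    ∀ P : Finset (Finset V), IsPack G k P H → P.card + H.card ≤ m →
      ∃ P' : Finset (Finset V), P'.card = P.card + H.card ∧ IsPack G k P' ∅ := by
  induction H using Finset.induction with
  | empty => exact fun P hP _ => ⟨P, by simp, hP⟩
  | insert x H hx ih =>
    intro P hP hc
    rw [Finset.card_insert_of_notMem hx] at hc
    set F := H ∪ P.biUnion id with hFdef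
    have hFc : F.card ≤ (m - 1) * (2 * k + 1) := by
      have h1 := Finset.card_union_le H (P.biUnion id)
      have h2 := hP.card_biUnion
      have h3 : (H.card + P.card) * (2 * k + 1) ≤ (m - 1) * (2 * k + 1) :=
        Nat.mul_le_mul_right _ (by omega)
      nlinarith
    have hFc' : F.card + k ≤ m * (2 * k + 1) + k := by
      have : (m - 1) * (2 * k + 1) ≤ m * (2 * k + 1) := Nat.mul_le_mul_right _ (by omega)
      omega
    have hxF : x ∉ F := by
      simp only [hFdef, Finset.mem_union, Finset.mem_biUnion, id, not_or, not_exists, not_and]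
      refine ⟨hx, fun T hT hxT => ?_⟩
      exact Finset.disjoint_left.1 (hP.avoid T hT) hxT (Finset.mem_insert_self _ _)
    have hw : HasWheel G k ((A \ F) ∪ (B \ F)) := by
      rcases hH x (Finset.mem_insert_self _ _) with ⟨h1, h2⟩ | ⟨h1, h2⟩
      · exact hub_wheel hm hd hcomA hFc h1 hxF (hFc'.trans h2)
      · rw [Finset.union_comm]
        exact hub_wheel hm hd.symm hcomB hFc h1 hxF (hFc'.trans h2)
    have hPH : IsPack G k P H := ⟨hP.pair, hP.wheel, hP.card,
      fun T hT => Disjoint.mono_right (Finset.subset_insert _ _) (hP.avoid T hT)⟩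
    have hdF : Disjoint ((A \ F) ∪ (B \ F)) F :=
      Finset.disjoint_union_left.2 ⟨Finset.sdiff_disjoint, Finset.sdiff_disjoint⟩
    obtain ⟨P', h1, h2⟩ := hPH.insert (Disjoint.mono_right Finset.subset_union_left hdF)
      (Disjoint.mono_right Finset.subset_union_right hdF) hw
    obtain ⟨P'', h3, h4⟩ := ih (fun y hy => hH y (Finset.mem_insert_of_mem hy)) P' h2 (by omega)
    refine ⟨P'', ?_, h4⟩
    rw [Finset.card_insert_of_notMem hx]
    omega

/-! ### Counting edges -/

/-- Number of ordered adjacent pairs in `X × Y`. -/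
def ee (G : SimpleGraph V) [DecidableRel G.Adj] (X Y : Finset V) : ℕ := ∑ x ∈ X, dg G Y x

lemma ee_comm (X Y : Finset V) : ee G X Y = ee G Y X := by
  have : ∀ X : Finset V, ∀ v, dg G X v = ∑ w ∈ X, if G.Adj v w then 1 else 0 :=
    fun X v => Finset.card_filter _ _
  simp only [ee, this]
  rw [Finset.sum_comm]
  simp only [G.adj_comm]

lemma ee_union_left {X X' : Finset V} (h : Disjoint X X') (Y : Finset V) :
    ee G (X ∪ X') Y = ee G X Y + ee G X' Y := Finset.sum_union h

lemma ee_union_right {Y Y' : Finset V} (h : Disjoint Y Y') (X : Finset V) :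
    ee G X (Y ∪ Y') = ee G X Y + ee G X Y' := by
  rw [ee_comm, ee_union_left h, ee_comm Y, ee_comm Y']

lemma ee_add_ms (X Y : Finset V) : ee G X Y + ∑ x ∈ X, ms G Y x = X.card * Y.card := by
  rw [ee, ← Finset.sum_add_distrib]
  have : ∀ x ∈ X, dg G Y x + ms G Y x = Y.card := fun x _ =>
    Finset.card_filter_add_card_filter_not _
  rw [Finset.sum_congr rfl this, Finset.sum_const, smul_eq_mul]

lemma ee_le_mul (X Y : Finset V) {D : ℕ} (h : ∀ x ∈ X, dg G Y x ≤ D) : ee G X Y ≤ X.card * D :=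
  Finset.sum_le_card_nsmul _ _ _ h

/-- Removing from `X` the vertices of a set, each of degree at most `D`, destroys few edges. -/
lemma ee_self_le {X F : Finset V} {D c : ℕ} (hD : ∀ x ∈ X ∩ F, dg G X x ≤ D)
    (hc : (X ∩ F).card ≤ c) : ee G X X ≤ ee G (X \ F) (X \ F) + 2 * (c * D) := by
  have hd : Disjoint (X \ F) (X ∩ F) := Finset.disjoint_sdiff_inter X F
  have hu : X \ F ∪ X ∩ F = X := Finset.sdiff_union_inter X F
  have h1 : ee G (X ∩ F) X ≤ c * D := (ee_le_mul _ _ hD).trans (Nat.mul_le_mul_right _ hc)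
  have h2 : ee G X X = ee G (X \ F) X + ee G (X ∩ F) X := by
    conv_lhs => rw [← hu, ee_union_left hd, hu]
  have h3 : ee G (X \ F) X = ee G (X \ F) (X \ F) + ee G (X \ F) (X ∩ F) := by
    conv_lhs => rw [← hu, ee_union_right hd, hu]
  have h4 : ee G (X ∩ F) X = ee G (X ∩ F) (X \ F) + ee G (X ∩ F) (X ∩ F) := by
    conv_lhs => rw [← hu, ee_union_right hd, hu]
  have h5 := ee_comm (G := G) (X ∩ F) (X \ F)
  omega

lemma twice_edges [Fintype V] (G : SimpleGraph V) [DecidableRel G.Adj] :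
    2 * Nat.card G.edgeSet = ee G Finset.univ Finset.univ := by
  rw [Nat.card_eq_fintype_card, ← edgeFinset_card, ← sum_degrees_eq_twice_card_edges]
  refine Finset.sum_congr rfl (fun v _ => ?_)
  rw [dg, ← card_neighborFinset_eq_degree, neighborFinset_eq_filter]

/-- Double counting of the edges, where `H` collects the vertices of large degree, and `F ⊇ H` has
been removed from the parts: the edges at `H`, the cross pairs outside `H`, and the edges inside
the parts. -/
lemma edges_le [Fintype V] (hd : Disjoint A B) (hu : A ∪ B = Finset.univ) {H F : Finset V}
    {D c M : ℕ} (hHF : H ⊆ F)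
    (hDA : ∀ x ∈ A \ H, dg G A x ≤ D) (hDB : ∀ x ∈ B \ H, dg G B x ≤ D)
    (hc : (F \ H).card ≤ c)
    (hcore : ee G (A \ F) (A \ F) + ee G (B \ F) (B \ F) ≤
      M + 2 * ∑ v ∈ A \ F, ms G (B \ F) v) :
    2 * Nat.card G.edgeSet ≤ H.card * (Fintype.card V - 1) + (Fintype.card V - H.card) * H.card +
      2 * ((A \ H).card * (B \ H).card) + M + 4 * (c * D) := by
  have hdis : Disjoint H (Finset.univ \ H) := Finset.disjoint_sdiff
  have huH : H ∪ (Finset.univ \ H) = Finset.univ := by simp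
  have hW : Finset.univ \ H = (A \ H) ∪ (B \ H) := by rw [← hu, Finset.union_sdiff_distrib]
  have hdAB : Disjoint (A \ H) (B \ H) :=
    Disjoint.mono Finset.sdiff_subset Finset.sdiff_subset hd
  have e1 : ee G Finset.univ Finset.univ = ee G H Finset.univ + ee G (Finset.univ \ H) H +
      ee G (Finset.univ \ H) (Finset.univ \ H) := by
    conv_lhs => rw [← huH, ee_union_left hdis, ee_union_right hdis (Finset.univ \ H), huH]
    ring
  have e2 : ee G H Finset.univ ≤ H.card * (Fintype.card V - 1) := by
    apply ee_le_mul
    intro x _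
    have : dg G Finset.univ x = G.degree x := by
      rw [dg, ← card_neighborFinset_eq_degree, neighborFinset_eq_filter]
    rw [this]
    have := G.degree_lt_card_verts x
    omega
  have e3 : ee G (Finset.univ \ H) H ≤ (Fintype.card V - H.card) * H.card := by
    have := ee_le_mul (G := G) (Finset.univ \ H) H (D := H.card)
      (fun x _ => Finset.card_filter_le _ _)
    rwa [Finset.card_univ_sdiff] at this
  have e4 : ee G (Finset.univ \ H) (Finset.univ \ H) = ee G (A \ H) (A \ H) + ee G (B \ H) (B \ H) +
      2 * ee G (A \ H) (B \ H) := by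
    rw [hW, ee_union_left hdAB, ee_union_right hdAB, ee_union_right hdAB, ee_comm (B \ H) (A \ H)]
    ring
  have hsd : ∀ X : Finset V, (X \ H) \ F = X \ F := by
    intro X
    ext y
    simp only [Finset.mem_sdiff]
    exact ⟨fun h => ⟨h.1.1, h.2⟩, fun h => ⟨⟨h.1, fun hy => h.2 (hHF hy)⟩, h.2⟩⟩
  have hcc : ∀ X : Finset V, ((X \ H) ∩ F).card ≤ c := by
    intro X
    refine le_trans (Finset.card_le_card ?_) hc
    intro y hy
    simp only [Finset.mem_inter, Finset.mem_sdiff] at hy ⊢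
    exact ⟨hy.2, hy.1.2⟩
  have hmono : ∀ X : Finset V, ∀ x, dg G (X \ H) x ≤ dg G X x := fun X x =>
    Finset.card_le_card (Finset.filter_subset_filter _ Finset.sdiff_subset)
  have e5 := ee_self_le (G := G) (X := A \ H) (F := F) (D := D)
    (fun x hx => (hmono A x).trans (hDA x (Finset.mem_inter.1 hx).1)) (hcc A)
  have e6 := ee_self_le (G := G) (X := B \ H) (F := F) (D := D)
    (fun x hx => (hmono B x).trans (hDB x (Finset.mem_inter.1 hx).1)) (hcc B)
  rw [hsd] at e5 e6
  have e7 := ee_add_ms (G := G) (A \ H) (B \ H)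
  have e8 : ∑ v ∈ A \ F, ms G (B \ F) v ≤ ∑ v ∈ A \ H, ms G (B \ H) v := by
    refine (Finset.sum_le_sum fun v _ => ?_).trans
      (Finset.sum_le_sum_of_subset (Finset.sdiff_subset_sdiff le_rfl hHF))
    exact Finset.card_le_card (Finset.filter_subset_filter _ (Finset.sdiff_subset_sdiff le_rfl hHF))
  rw [twice_edges, e1, e4]
  omega

end

/-- The comparison with the extremal function, evaluated at `M - r`, where `M ≥ s` are the sizes of
the two parts after deletion of `h` vertices of large degree, and `r = m - 1 - h`. -/
lemma numeric {k m h r M s D e : ℕ} (hk : 3 ≤ k) (hr : h + r + 1 = m)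
    (hM : r + k + 2 * (D * (2 * k + 1)) ≤ M)
    (he : 2 * e ≤ h * (M + s + h - 1) + (M + s + h - h) * h + 2 * (M * s) + ((k - 1) * M + 2) +
      4 * (r * (2 * k + 1) * D)) :
    e ≤ (m - 1).choose 2 + (k - 1) * (M - r) / 2 + ((M - r) + m - 1) * (M + s + h - m + 1) -
      (M - r) ^ 2 + 1 := by
  obtain ⟨p, rfl⟩ : ∃ p, M = p + r := ⟨M - r, by omega⟩
  have h1 : p + r - r = p := by omega
  have h2 : p + r + s + h - m + 1 = p + s := by omega
  have h3 : p + m - 1 = p + (h + r) := by omega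
  have h4 : m - 1 = h + r := by omega
  have h5 : p + r + s + h - h = p + r + s := by omega
  rw [h1, h2, h3, h4]
  rw [h5] at he
  have h6 : (p + (h + r)) * (p + s) = p ^ 2 + (p * s + (h + r) * (p + s)) := by ring
  rw [h6, ← Nat.add_assoc, Nat.add_right_comm, Nat.add_sub_cancel]
  have h7 : 2 * (h + r).choose 2 + (h + r) = (h + r) * (h + r) := by
    have := Nat.triangle_succ (h + r)
    rw [Nat.choose_two_right, Nat.mul_div_cancel' (Nat.even_mul_pred_self _).two_dvd]
    rcases Nat.eq_zero_or_pos (h + r) with h0 | h0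
    · simp [h0]
    · rw [Nat.mul_sub_one]
      have := Nat.le_mul_self (h + r)
      omega
  have h8 : h * (p + r + s + h - 1) + h = h * (p + r + s + h) := by
    rcases Nat.eq_zero_or_pos h with h0 | h0
    · simp [h0]
    · rw [Nat.mul_sub_one]
      have : h ≤ h * (p + r + s + h) := Nat.le_mul_of_pos_right _ (by omega)
      omega
  obtain ⟨k', rfl⟩ : ∃ k', k = k' + 1 := ⟨k - 1, by omega⟩
  rw [Nat.add_sub_cancel] at *
  set c := (h + r).choose 2
  set D' := D * (2 * (k' + 1) + 1) with hD'
  have h9 : r * (2 * (k' + 1) + 1) * D = r * D' := by rw [hD']; ring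
  rw [h9] at he
  have h10 : r * (r + (k' + 1) + 2 * D') ≤ r * (p + r) := Nat.mul_le_mul_left _ hM
  have h11 : 2 * e ≤ 2 * (c + p * s + (h + r) * (p + s)) + k' * p + 2 := by
    nlinarith
  omega

/-! ### Maximal families of wheels and the final estimate -/

section
variable {V : Type} [DecidableEq V] {G : SimpleGraph V} [DecidableRel G.Adj] {k : ℕ}
  {A B : Finset V}

/-- If no family avoiding `H` has `t` wheels, then some smaller family cannot be enlarged by one. -/
lemma exists_maximal_pack (H : Finset V) : ∀ t : ℕ,
    (∃ P : Finset (Finset V), P.card = t ∧ IsPack G k P H) ∨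
    ∃ P : Finset (Finset V), P.card < t ∧ IsPack G k P H ∧
      ¬ ∃ P' : Finset (Finset V), P'.card = P.card + 1 ∧ IsPack G k P' H
  | 0 => Or.inl ⟨∅, rfl, by simp, by simp, by simp, by simp⟩
  | t + 1 => by
    rcases exists_maximal_pack H t with ⟨P, rfl, hP⟩ | ⟨P, hc, hP⟩
    · by_cases h : ∃ P' : Finset (Finset V), P'.card = P.card + 1 ∧ IsPack G k P' H
      · exact Or.inl h
      · exact Or.inr ⟨P, Nat.lt_succ_self _, hP, h⟩
    · exact Or.inr ⟨P, hc.trans (Nat.lt_succ_self _), hP⟩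

/-- The core inequality, symmetric in the two parts. -/
lemma Good.core_max (h : Good G k A B) (hk : 3 ≤ k) {E M : ℕ} (hE : E = 100 * k ^ 3)
    (hA : E * (k * (3 * k + k * (2 * E * k ^ 2))) < A.card)
    (hB : E * (k * (3 * k + k * (2 * E * k ^ 2))) < B.card)
    (hAM : A.card ≤ M) (hBM : B.card ≤ M) :
    ee G A A + ee G B B ≤ ((k - 1) * M + 2) + 2 * ∑ v ∈ A, ms G B v := by
  have h1 : (k - 1) * A.card ≤ (k - 1) * M := Nat.mul_le_mul_left _ hAM
  have h2 : (k - 1) * B.card ≤ (k - 1) * M := Nat.mul_le_mul_left _ hBM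
  unfold ee
  rcases le_total B.card A.card with hc | hc
  · have := h.core hk hc hE hA
    omega
  · have := h.symm.core hk hc hE hB
    rw [sum_ms_comm] at this
    omega

end

/-- The threshold on the size of the smaller part. -/
def threshold (k m : ℕ) : ℕ :=
  100 * k ^ 3 * (k * (3 * k + k * (2 * (100 * k ^ 3) * k ^ 2))) + m * (2 * k + 1) +
    (m + k + 2 * ((m * (2 * k + 1) + k) * (2 * k + 1))) + 1

/-- the key lemma bounding the number of edges of a bipartitioned graph with
rich common neighborhoods which has no `m` disjoint copies of `W_{2k+1}`. -/
theorem key_lemma (k m : ℕ) (hk : 3 ≤ k) (hm : 2 ≤ m) :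
    ∃ N : ℕ, ∀ (V : Type) [Fintype V] [DecidableEq V] (G : SimpleGraph V)
      [DecidableRel G.Adj] (V₁ V₂ : Finset V),
      Disjoint V₁ V₂ → V₁ ∪ V₂ = Finset.univ →
      V₁.Nonempty → V₂.Nonempty →
      N ≤ V₂.card → V₂.card ≤ V₁.card →
      ¬ Contains G (disjointCopies m (wheelGraph (2 * k + 1))) →
      (∀ S ⊆ V₁, S.card ≤ m * (k + 1) →
        m * (2 * k + 1) ≤ (V₂.filter (fun w => ∀ v ∈ S, G.Adj v w)).card) →
      (∀ S ⊆ V₂, S.card ≤ m * (k + 1) →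
        m * (2 * k + 1) ≤ (V₁.filter (fun w => ∀ v ∈ S, G.Adj v w)).card) →
      Nat.card G.edgeSet ≤
        (Finset.Icc 1 (V₁.card + V₂.card - m + 1)).sup (fun p =>
          (m - 1).choose 2 + (k - 1) * p / 2 +
            (p + m - 1) * (V₁.card + V₂.card - m + 1) - p ^ 2 + 1) := by
  refine ⟨threshold k m, ?_⟩
  intro V _ _ G _ A B hd hu _ _ hN hBA hfree hcomA' hcomB'
  -- `convert` reconciles the two decidability instances for the common neighborhoods.
  have hcomA : Com G k m A B := fun S hS hc => by convert hcomA' S hS hc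
  have hcomB : Com G k m B A := fun S hS hc => by convert hcomB' S hS hc
  have hm1 : 1 ≤ m := by omega
  set D := m * (2 * k + 1) + k with hD
  set E := 100 * k ^ 3 with hE
  set H : Finset V := A.filter (fun x => D ≤ dg G A x) ∪ B.filter (fun x => D ≤ dg G B x) with hHdef
  have hH : ∀ x ∈ H, (x ∈ A ∧ D ≤ dg G A x) ∨ (x ∈ B ∧ D ≤ dg G B x) := by
    intro x hx
    simpa [hHdef] using hx
  have habs : ∀ H' ⊆ H, ∀ P : Finset (Finset V), IsPack G k P H' → P.card + H'.card ≠ m := by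
    intro H' hH' P hP hc
    obtain ⟨P', h1, h2⟩ := IsPack.absorb hm1 hd hcomA hcomB H' (fun x hx => hH x (hH' hx)) P hP hc.le
    have := h2.contains
    rw [h1, hc] at this
    exact hfree this
  have hHc : H.card < m := by
    by_contra! hge
    obtain ⟨H', h1, h2⟩ := Finset.exists_subset_card_eq hge
    exact habs H' h1 ∅ ⟨by simp, by simp, by simp, by simp⟩ (by simpa using h2)
  obtain ⟨P, hPc, hP, hmax⟩ : ∃ P : Finset (Finset V), P.card < m - H.card ∧ IsPack G k P H ∧
      ¬ ∃ P' : Finset (Finset V), P'.card = P.card + 1 ∧ IsPack G k P' H := by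
    rcases exists_maximal_pack (G := G) (k := k) H (m - H.card) with ⟨P, h1, h2⟩ | h
    · exact absurd (by omega) (habs H subset_rfl P h2)
    · exact h
  obtain ⟨r, hr⟩ : ∃ r, H.card + r + 1 = m := ⟨m - 1 - H.card, by omega⟩
  set F := H ∪ P.biUnion id with hFdef
  have hHF : H ⊆ F := Finset.subset_union_left
  have hPcard : (P.biUnion id).card ≤ r * (2 * k + 1) :=
    hP.card_biUnion.trans (Nat.mul_le_mul_right _ (by omega))
  have hFc : F.card ≤ (m - 1) * (2 * k + 1) := by
    have h1 := Finset.card_union_le H (P.biUnion id)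
    have h2 : m - 1 = H.card + r := by omega
    have h3 : H.card ≤ H.card * (2 * k + 1) := Nat.le_mul_of_pos_right _ (by omega)
    rw [h2, Nat.add_mul]
    rw [← hFdef] at h1
    omega
  have hFH : (F \ H).card ≤ r * (2 * k + 1) := by
    refine (Finset.card_le_card ?_).trans hPcard
    rw [hFdef, Finset.union_sdiff_left]
    exact Finset.sdiff_subset
  have hgood : Good G k (A \ F) (B \ F) := by
    refine ⟨Disjoint.mono Finset.sdiff_subset Finset.sdiff_subset hd, com_sdiff hm1 hcomA hFc,
      com_sdiff hm1 hcomB hFc, fun hw => hmax ?_⟩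
    have hdF : Disjoint ((A \ F) ∪ (B \ F)) F :=
      Finset.disjoint_union_left.2 ⟨Finset.sdiff_disjoint, Finset.sdiff_disjoint⟩
    exact hP.insert (Disjoint.mono_right Finset.subset_union_left hdF)
      (Disjoint.mono_right Finset.subset_union_right hdF) hw
  have hmF : (m - 1) * (2 * k + 1) ≤ m * (2 * k + 1) := Nat.mul_le_mul_right _ (by omega)
  have hAF := Finset.le_card_sdiff F A
  have hBF := Finset.le_card_sdiff F B
  have hAH := Finset.le_card_sdiff H A
  have hBH := Finset.le_card_sdiff H B
  have hAFH : (A \ F).card ≤ (A \ H).card :=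
    Finset.card_le_card (Finset.sdiff_subset_sdiff le_rfl hHF)
  have hBFH : (B \ F).card ≤ (B \ H).card :=
    Finset.card_le_card (Finset.sdiff_subset_sdiff le_rfl hHF)
  have hmk : m ≤ m * (2 * k + 1) := Nat.le_mul_of_pos_right _ (by omega)
  rw [threshold, ← hE, ← hD] at hN
  have hAB : A.card + B.card = Fintype.card V := by
    rw [← Finset.card_union_of_disjoint hd, hu, Finset.card_univ]
  have hABH : (A \ H).card + (B \ H).card + H.card = Fintype.card V := by
    rw [← Finset.card_union_of_disjoint
      (Disjoint.mono Finset.sdiff_subset Finset.sdiff_subset hd), ← Finset.union_sdiff_distrib, hu,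
      Finset.card_univ_sdiff]
    have := Finset.card_le_univ H
    omega
  obtain ⟨M, s, hMs, hprod, hAM, hBM⟩ : ∃ M s : ℕ, (A \ H).card + (B \ H).card = M + s ∧
      (A \ H).card * (B \ H).card = M * s ∧ (A \ H).card ≤ M ∧ (B \ H).card ≤ M := by
    rcases le_total (A \ H).card (B \ H).card with h | h
    · exact ⟨_, _, Nat.add_comm _ _, Nat.mul_comm _ _, h, le_rfl⟩
    · exact ⟨_, _, rfl, rfl, le_rfl, h⟩
  have hcore := hgood.core_max hk hE (by omega) (by omega) (hAFH.trans hAM) (hBFH.trans hBM)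
  have hedges := edges_le (D := D) hd hu hHF
    (fun x hx => by
      simp only [hHdef, Finset.mem_sdiff, Finset.mem_union, Finset.mem_filter, not_or, not_and] at hx
      have := hx.2.1 hx.1
      omega)
    (fun x hx => by
      simp only [hHdef, Finset.mem_sdiff, Finset.mem_union, Finset.mem_filter, not_or, not_and] at hx
      have := hx.2.2 hx.1
      omega) hFH hcore
  have hV : Fintype.card V = M + s + H.card := by omega
  rw [hprod, hV] at hedges
  have hnum := numeric hk hr (D := D) (by omega) hedges
  rw [hAB, hV]
  exact hnum.trans (Finset.le_sup (f := fun p => (m - 1).choose 2 + (k - 1) * p / 2 +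
    (p + m - 1) * (M + s + H.card - m + 1) - p ^ 2 + 1) (by rw [Finset.mem_Icc]; omega))
end

section
/- Let W^h = W_{k_1} ∪ W_{k_2} ∪ ⋯ ∪ W_{k_m} be a vertex-disjoint union of m wheels (each k_i ≥ 4) in which exactly h of the wheels have an even number of vertices, and suppose h ≥ 1. Then there exists n₀ such that for all n > n₀, ex(n, W^h) = C(h−1,2) + (h−1)(n−h+1) + t(n−h+1, 3), where t(N,3) is the number of edges of the Turán graph T(N,3). -/
/-!
Write `s = h - 1`. The extremal graph is the join of `K_s` with the Turán graph `T(n - s, 3)`. An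
even wheel is not `3`-colourable, so each even wheel of a copy of `W^h` inside this graph uses one
of the `s` dominating vertices, and `s + 1` disjoint even wheels cannot (`not_contains_extremalGraph`).

For the upper bound let `G` contain no disjoint copies of the wheels.

* Suppose first that all degrees are at least `2n/3 - 2`. The minimum degree version of the
  Erdős–Stone theorem gives a large complete tripartite subgraph. It contains every odd wheel, many
  times over. It also turns certain small vertex sets into *seeds*, i.e. sets such that every even
  wheel of bounded size can be found off any bounded set that is disjoint from the seed: a vertex
  with many neighbours in all three parts is a seed (`seed_singleton`), and so is an edge whose ends
  have many common neighbours in two parts (`seed_pair`). Disjoint seeds produce disjoint even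
  wheels, so `G` has no `s + 1` disjoint seeds. Hence (`exists_cover`) the set `R` of seed vertices
  has at most `s` elements, and the seed pairs off `R` are covered by a set `Y` of at most
  `2 (s - |R|)` vertices.
* Degree counting against the complete tripartite subgraph shows that all but a small fraction of the
  vertices split into three independent sets (`exists_independent_parts`). These sets are nearly
  balanced and nearly completely joined, and the vertices off `R` are distributed among them so that
  each has few neighbours in its own class and every edge inside a class meets `Y`
  (`exists_coloring`). Each vertex missing from `R` costs about `n/3` edges, which the at most two
  vertices of `Y` that it allows for, each on at most `6n/100` edges inside its class, do not make
  up for (`edge_arith`). This gives the required bound on the number of edges.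
* In general, as long as a vertex of degree less than `2n/3 - 2` exists, delete it. Every deletion
  improves the number of edges relative to the extremal function by at least one
  (`card_edgeSet_le_of_not_largeDegrees`), so if the bound failed for a graph with sufficiently many
  vertices, this would lead to a graph on a bounded number of vertices with more edges than it has
  room for (`exists_bound`).
-/

open SimpleGraph

namespace WheelTuran

open Finset
open scoped Classical

/-! ### Finding wheels -/

section Embedding

lemma wheelGraph_adj_inl_inr (q : ℕ) (a : Unit) (b : Fin (q - 1)) :
    (wheelGraph q).Adj (Sum.inl a) (Sum.inr b) := by
  simp [wheelGraph, graphJoin]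

lemma wheelGraph_adj_inr_inr {q : ℕ} {a b : Fin (q - 1)} :
    (wheelGraph q).Adj (Sum.inr a) (Sum.inr b) ↔ (cycleGraph (q - 1)).Adj a b := by
  simp only [wheelGraph, graphJoin, SimpleGraph.fromRel_adj]
  constructor
  · rintro ⟨-, h | h⟩
    · exact h
    · exact h.symm
  · exact fun h => ⟨fun e => h.ne (Sum.inr_injective e), Or.inl h⟩

lemma wheelGraph_not_adj_inl_inl {q : ℕ} (a b : Unit) :
    ¬ (wheelGraph q).Adj (Sum.inl a) (Sum.inl b) := by
  simp [wheelGraph, graphJoin]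

variable {V : Type*}

/-- `WheelOn G q S` says that `G` has a copy of the wheel `W_q` all of whose vertices lie in `S`,
where `S` has at most `q` elements (so for `q ≥ 1` the set `S` is the vertex set of the copy). -/
def WheelOn (G : SimpleGraph V) (q : ℕ) (S : Finset V) : Prop :=
  #S ≤ q ∧ ∃ f : wheelGraph q →g G, Function.Injective f ∧ ∀ x, f x ∈ S

/-- A hub `u`, a rim vertex `w` and a path `r 0, …, r (q - 3)` closing up through `w` form a
wheel. -/
lemma wheelOn_of_path {G : SimpleGraph V} {q : ℕ} (hq : 4 ≤ q) {u w : V} {r : ℕ → V}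
    (huw : G.Adj u w) (hur : ∀ i < q - 2, G.Adj u (r i))
    (hr : ∀ i, i + 1 < q - 2 → G.Adj (r i) (r (i + 1)))
    (hinj : ∀ i < q - 2, ∀ j < q - 2, r i = r j → i = j)
    (hwr : ∀ i < q - 2, r i ≠ w) (h0 : G.Adj w (r 0)) (h1 : G.Adj w (r (q - 3))) :
    WheelOn G q (insert u (insert w ((range (q - 2)).image r))) := by
  -- the rim, with `w` in position `0`
  let g : ℕ → V := fun i => if i = 0 then w else r (i - 1)
  have hcyc : ∀ a b : Fin (q - 1), (a - b).val = 1 → G.Adj (g a) (g b) := by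
    intro a b hab
    have ha := a.2
    have hb := b.2
    rw [Fin.sub_def] at hab
    simp only at hab
    have key : a.val = b.val + 1 ∨ (a.val = 0 ∧ b.val = q - 2) := by
      by_cases hle : b.val ≤ a.val
      · left
        rw [show q - 1 - b.val + a.val = (a.val - b.val) + (q - 1) by omega,
          Nat.add_mod_right, Nat.mod_eq_of_lt (by omega)] at hab
        omega
      · right
        rw [Nat.mod_eq_of_lt (by omega)] at hab
        omega
    rcases key with h | ⟨h, h'⟩
    · rcases Nat.eq_zero_or_pos b.val with hb0 | hb0
      · simpa [g, h, hb0] using h0.symm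
      · have := hr (b.val - 1) (by omega)
        rw [Nat.sub_add_cancel hb0] at this
        simpa [g, h, hb0.ne'] using this.symm
    · have e : q - 2 - 1 = q - 3 := by omega
      have e' : q - 2 ≠ 0 := by omega
      simpa [g, h, h', e, e'] using h1
  have hug : ∀ a : Fin (q - 1), G.Adj u (g a) := by
    intro a
    by_cases ha : a.val = 0
    · simpa [g, ha] using huw
    · simpa [g, ha] using hur (a.val - 1) (by omega)
  let F : Unit ⊕ Fin (q - 1) → V := Sum.elim (fun _ => u) (fun a => g a)
  have hginj : ∀ a b : Fin (q - 1), g a = g b → a = b := by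
    intro a b hab
    apply Fin.ext
    by_cases ha : a.val = 0 <;> by_cases hb : b.val = 0
    · omega
    · simp only [g, ha, hb, if_true, if_false] at hab
      exact absurd hab.symm (hwr _ (by omega))
    · simp only [g, ha, hb, if_true, if_false] at hab
      exact absurd hab (hwr _ (by omega))
    · simp only [g, ha, hb, if_false] at hab
      have := hinj _ (by omega) _ (by omega) hab
      omega
  refine ⟨?_, ⟨F, ?_⟩, ?_, ?_⟩
  · have h1 := card_insert_le u (insert w ((range (q - 2)).image r))
    have h2 := card_insert_le w ((range (q - 2)).image r)
    have h3 : #((range (q - 2)).image r) ≤ #(range (q - 2)) := card_image_le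
    rw [card_range] at h3
    omega
  · rintro (a | a) (b | b) hab
    · exact absurd hab (wheelGraph_not_adj_inl_inl a b)
    · exact hug b
    · exact (hug a).symm
    · rw [wheelGraph_adj_inr_inr, cycleGraph_adj'] at hab
      rcases hab with hab | hab
      · exact hcyc _ _ hab
      · exact (hcyc _ _ hab).symm
  · rintro (a | a) (b | b) hab
    · rfl
    · exact absurd hab (hug b).ne
    · exact absurd hab (hug a).ne'
    · exact congrArg _ (hginj _ _ hab)
  · rintro (a | a)
    · exact mem_insert_self _ _
    · refine mem_insert_of_mem ?_
      by_cases ha : a.val = 0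
      · exact mem_insert.2 (Or.inl (if_pos ha))
      · refine mem_insert_of_mem (mem_image.2 ⟨a.val - 1, mem_range.2 (by omega), ?_⟩)
        exact (if_neg ha).symm

/-- Each vertex of either of `C`, `C'` has at most `p` non-neighbours in the other one. -/
def AlmostComplete (G : SimpleGraph V) (p : ℕ) (C C' : Finset V) : Prop :=
  (∀ a ∈ C, #{b ∈ C' | ¬ G.Adj a b} ≤ p) ∧ ∀ a ∈ C', #{b ∈ C | ¬ G.Adj a b} ≤ p

lemma AlmostComplete.mono {G : SimpleGraph V} {p : ℕ} {C C' D D' : Finset V}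
    (h : AlmostComplete G p C C') (hD : D ⊆ C) (hD' : D' ⊆ C') : AlmostComplete G p D D' :=
  ⟨fun a ha => (card_le_card (filter_subset_filter _ hD')).trans (h.1 a (hD ha)),
    fun a ha => (card_le_card (filter_subset_filter _ hD)).trans (h.2 a (hD' ha))⟩

/-- A path alternating between `C` and `C'` and avoiding `X` can be built greedily. -/
lemma exists_alternating_path {G : SimpleGraph V} {p : ℕ} {C C' X : Finset V}
    (h : AlmostComplete G p C C') (L : ℕ) (hC : p + #X + L < #C) (hC' : p + #X + L < #C') :
    ∃ r : ℕ → V, (∀ i < L, (Even i → r i ∈ C) ∧ (¬ Even i → r i ∈ C') ∧ r i ∉ X) ∧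
      (∀ i < L, ∀ j < L, r i = r j → i = j) ∧ ∀ i, i + 1 < L → G.Adj (r i) (r (i + 1)) := by
  induction L with
  | zero =>
    obtain ⟨a, -⟩ : C.Nonempty := card_pos.1 (by omega)
    exact ⟨fun _ => a, by simp, by simp, by simp⟩
  | succ L ih =>
    obtain ⟨r, h1, h2, h3⟩ := ih (by omega) (by omega)
    -- the new vertex lies in the right set and is joined to the previous vertex of the path
    have hnew : ∃ a, (Even L → a ∈ C) ∧ (¬ Even L → a ∈ C') ∧ a ∉ X ∧
        (∀ i < L, r i ≠ a) ∧ (0 < L → G.Adj (r (L - 1)) a) := by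
      let D := if Even L then C else C'
      have hD : p + #X + (L + 1) < #D := by
        by_cases hL : Even L <;> simpa [D, hL]
      have hbad : #{b ∈ D | 0 < L ∧ ¬ G.Adj (r (L - 1)) b} ≤ p := by
        rcases Nat.eq_zero_or_pos L with h0 | h0
        · simp [h0]
        · have := h1 (L - 1) (by omega)
          simp only [h0, true_and]
          by_cases hL : Even L
          · have hodd : ¬ Even (L - 1) := by
              rw [Nat.even_sub (by omega)]; simp [hL]
            simpa [D, hL] using h.2 _ (this.2.1 hodd)
          · have hev : Even (L - 1) := by
              rw [Nat.even_sub (by omega)]; simp [hL]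
            simpa [D, hL] using h.1 _ (this.1 hev)
      have hlt : #({b ∈ D | 0 < L ∧ ¬ G.Adj (r (L - 1)) b} ∪ (X ∪ (range L).image r)) < #D := by
        have c1 := card_union_le {b ∈ D | 0 < L ∧ ¬ G.Adj (r (L - 1)) b} (X ∪ (range L).image r)
        have c2 := card_union_le X ((range L).image r)
        have c3 : #((range L).image r) ≤ #(range L) := card_image_le
        rw [card_range] at c3
        omega
      obtain ⟨a, haD, ha⟩ := exists_mem_notMem_of_card_lt_card hlt
      simp only [mem_union, mem_filter, mem_image, mem_range, not_or, not_and, not_exists,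
        not_not] at ha
      refine ⟨a, fun hL => by simpa [D, hL] using haD, fun hL => by simpa [D, hL] using haD,
        ha.2.1, ha.2.2, ha.1 haD⟩
    obtain ⟨a, ha1, ha2, ha3, ha4, ha5⟩ := hnew
    have hu : ∀ i < L, Function.update r L a i = r i := fun i hi =>
      Function.update_of_ne hi.ne _ _
    have hL : Function.update r L a L = a := Function.update_self _ _ _
    refine ⟨Function.update r L a, ?_, ?_, ?_⟩
    · intro i hi
      rcases Nat.lt_succ_iff_lt_or_eq.1 hi with hi | rfl
      · rw [hu i hi]; exact h1 i hi
      · rw [hL]; exact ⟨ha1, ha2, ha3⟩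
    · intro i hi j hj hij
      rcases Nat.lt_succ_iff_lt_or_eq.1 hi with hi | rfl <;>
        rcases Nat.lt_succ_iff_lt_or_eq.1 hj with hj | rfl
      · rw [hu i hi, hu j hj] at hij; exact h2 i hi j hj hij
      · rw [hu i hi, hL] at hij; exact absurd hij (ha4 i hi)
      · rw [hu j hj, hL] at hij; exact absurd hij.symm (ha4 j hj)
      · rfl
    · intro i hi
      rcases Nat.lt_succ_iff_lt_or_eq.1 hi with hi | hi
      · rw [hu i (by omega), hu (i + 1) hi]; exact h3 i hi
      · have := ha5 (by omega)
        rw [hu i (by omega), hi, hL]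
        rwa [show L - 1 = i by omega] at this

/-- A wheel avoiding `X`, with hub `u`, a prescribed rim vertex `w`, and the remaining rim vertices
alternating between `C` and `C'`. The rim path has `q - 2` vertices: its last vertex lies in `C`
when `q` is odd and in `C'` when `q` is even. -/
lemma exists_wheelOn {G : SimpleGraph V} {p q : ℕ} (hq : 4 ≤ q) {u w : V} {C C' X : Finset V}
    (h : AlmostComplete G p C C') (huw : G.Adj u w) (hu : u ∉ X) (hw : w ∉ X)
    (hCu : ∀ a ∈ C, G.Adj u a) (hCw : ∀ a ∈ C, G.Adj w a) (hCu' : ∀ a ∈ C', G.Adj u a)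
    (hCw' : Even q → ∀ a ∈ C', G.Adj w a)
    (hC : p + #X + q < #C) (hC' : p + #X + q < #C') :
    ∃ S, WheelOn G q S ∧ Disjoint S X := by
  have hX : #(insert w X) ≤ #X + 1 := card_insert_le _ _
  obtain ⟨r, h1, h2, h3⟩ := exists_alternating_path (X := insert w X) h (q - 2)
    (by omega) (by omega)
  have hr : ∀ i < q - 2, r i ≠ w ∧ r i ∉ X := fun i hi => by
    simpa [not_or] using (h1 i hi).2.2
  refine ⟨_, wheelOn_of_path hq huw ?_ h3 h2 (fun i hi => (hr i hi).1) ?_ ?_, ?_⟩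
  · intro i hi
    by_cases hi' : Even i
    · exact hCu _ ((h1 i hi).1 hi')
    · exact hCu' _ ((h1 i hi).2.1 hi')
  · exact hCw _ ((h1 0 (by omega)).1 Even.zero)
  · by_cases hi : Even (q - 3)
    · exact hCw _ ((h1 _ (by omega)).1 hi)
    · refine hCw' ?_ _ ((h1 _ (by omega)).2.1 hi)
      rw [Nat.even_sub (by omega)] at hi
      have : ¬ Even 3 := by decide
      tauto
  · simp only [disjoint_insert_left, hu, hw, not_false_iff, true_and]
    rw [Finset.disjoint_left]
    intro a ha
    obtain ⟨i, hi, rfl⟩ := mem_image.1 ha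
    exact (hr i (mem_range.1 hi)).2

end Embedding

/-! ### Seeds and their cover -/

section Seeds

variable {V : Type*}

/-- A set `D` of vertices is a seed if every even wheel of size at most `M` can be found in `G`
off any set of at most `M` vertices that is disjoint from `D`. -/
def Seed (G : SimpleGraph V) (M : ℕ) (D : Finset V) : Prop :=
  ∀ X : Finset V, #X ≤ M → Disjoint X D → ∀ q, Even q → 4 ≤ q → q ≤ M →
    ∃ S, WheelOn G q S ∧ Disjoint S X

/-- Every odd wheel of size at most `M` can be found off any set of at most `M` vertices. -/
def HasOddWheels (G : SimpleGraph V) (M : ℕ) : Prop :=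
  ∀ X : Finset V, #X ≤ M → ∀ q, ¬ Even q → 4 ≤ q → q ≤ M → ∃ S, WheelOn G q S ∧ Disjoint S X

/-- The wheels of sizes `k i` can be found in `G` vertex-disjointly. -/
def Packs {ι : Type*} (G : SimpleGraph V) (k : ι → ℕ) : Prop :=
  ∃ S : ι → Finset V, (∀ i, WheelOn G (k i) (S i)) ∧ ∀ i j, i ≠ j → Disjoint (S i) (S j)

lemma filter_not_le_add {B : Finset V} {P Q : V → Prop} :
    #B ≤ #{b ∈ B | P b ∧ Q b} + #{b ∈ B | ¬ P b} + #{b ∈ B | ¬ Q b} := by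
  have : B ⊆ {b ∈ B | P b ∧ Q b} ∪ {b ∈ B | ¬ P b} ∪ {b ∈ B | ¬ Q b} := by
    intro b hb
    simp only [mem_union, mem_filter, hb, true_and]
    tauto
  refine (card_le_card this).trans ((card_union_le _ _).trans ?_)
  gcongr
  exact card_union_le _ _

/-- An edge whose ends have many common neighbours in both of two almost completely joined sets is
a seed: one end is the hub of the wheel, the other a rim vertex, and the rest of the rim alternates
between the two sets. -/
lemma seed_pair {G : SimpleGraph V} {M p : ℕ} {u w : V} {B B' : Finset V}
    (h : AlmostComplete G p B B') (huw : G.Adj u w)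
    (hB : p + 2 * M < #{b ∈ B | G.Adj u b ∧ G.Adj w b})
    (hB' : p + 2 * M < #{b ∈ B' | G.Adj u b ∧ G.Adj w b}) : Seed G M {u, w} := by
  intro X hX hXD q hq hq4 hqM
  simp only [disjoint_insert_right, disjoint_singleton_right] at hXD
  exact exists_wheelOn hq4 (C := {b ∈ B | G.Adj u b ∧ G.Adj w b})
    (C' := {b ∈ B' | G.Adj u b ∧ G.Adj w b})
    (h.mono (filter_subset _ _) (filter_subset _ _)) huw hXD.1 hXD.2
    (fun a ha => (mem_filter.1 ha).2.1) (fun a ha => (mem_filter.1 ha).2.2)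
    (fun a ha => (mem_filter.1 ha).2.1) (fun _ a ha => (mem_filter.1 ha).2.2)
    (by omega) (by omega)

/-- A vertex with many neighbours in each of three almost completely joined sets is a seed. -/
lemma seed_singleton {G : SimpleGraph V} {M p : ℕ} {v : V} {B : Fin 3 → Finset V}
    (h : ∀ i j, i ≠ j → AlmostComplete G p (B i) (B j))
    (hv : ∀ i, 2 * p + 2 * M < #{b ∈ B i | G.Adj v b}) : Seed G M {v} := by
  intro X hX hXD q hq hq4 hqM
  rw [disjoint_singleton_right] at hXD
  obtain ⟨c, hc, hcX⟩ := exists_mem_notMem_of_card_lt_card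
    (show #X < #{b ∈ B 0 | G.Adj v b} by have := hv 0; omega)
  rw [mem_filter] at hc
  have key : ∀ i, i ≠ 0 → p + 2 * M < #{b ∈ B i | G.Adj v b ∧ G.Adj c b} := by
    intro i hi
    have h1 := hv i
    have h2 := (h 0 i hi.symm).1 c hc.1
    have h3 : #{b ∈ B i | G.Adj v b} ≤
        #{b ∈ B i | G.Adj v b ∧ G.Adj c b} + #{b ∈ B i | ¬ G.Adj c b} := by
      rw [← card_union_of_disjoint]
      · refine card_le_card fun b hb => ?_
        simp only [mem_union, mem_filter] at hb ⊢
        tauto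
      · rw [Finset.disjoint_left]
        intro b hb hb'
        simp only [mem_filter] at hb hb'
        tauto
    omega
  refine seed_pair (h 1 2 (by decide)) hc.2 (key 1 (by decide)) (key 2 (by decide)) X hX ?_
    q hq hq4 hqM
  simp only [disjoint_insert_right, disjoint_singleton_right]
  exact ⟨hXD, hcX⟩

/-- An odd wheel is `3`-colourable: its hub and one rim vertex are placed in two of the sets, and the
rest of the rim alternates between the third set and the one of that rim vertex. -/
lemma hasOddWheels {G : SimpleGraph V} {M p : ℕ} {B : Fin 3 → Finset V}
    (h : ∀ i j, i ≠ j → AlmostComplete G p (B i) (B j)) (hB : ∀ i, 3 * p + 2 * M < #(B i)) :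
    HasOddWheels G M := by
  intro X hX q hq hq4 hqM
  have b0 := hB 0
  have b1 := hB 1
  have b2 := hB 2
  obtain ⟨u, hu, huX⟩ := exists_mem_notMem_of_card_lt_card (show #X < #(B 0) by omega)
  have c1 := (h 0 1 (by decide)).1 u hu
  have c2 := (h 0 2 (by decide)).1 u hu
  have hsplit := card_filter_add_card_filter_not (s := B 1) (fun b => G.Adj u b)
  obtain ⟨w, hw, hwX⟩ := exists_mem_notMem_of_card_lt_card
    (show #X < #{b ∈ B 1 | G.Adj u b} by omega)
  rw [mem_filter] at hw
  have c3 := (h 1 2 (by decide)).1 w hw.1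
  have c4 := filter_not_le_add (B := B 2) (P := fun b => G.Adj u b) (Q := fun b => G.Adj w b)
  exact exists_wheelOn hq4 (C := {b ∈ B 2 | G.Adj u b ∧ G.Adj w b})
    (C' := {b ∈ B 1 | G.Adj u b}) ((h 2 1 (by decide)).mono (filter_subset _ _)
      (filter_subset _ _)) hw.2 huX hwX
    (fun a ha => (mem_filter.1 ha).2.1) (fun a ha => (mem_filter.1 ha).2.2)
    (fun a ha => (mem_filter.1 ha).2) (fun h => absurd h hq) (by omega) (by omega)

/-- Disjoint sets can be chosen one at a time, provided each can be chosen off any small set that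
is disjoint from its reserved set `D i`. -/
lemma exists_disjoint_family {ι : Type*} [Fintype ι] {M : ℕ} {k : ι → ℕ}
    {P : ι → Finset V → Prop} {D : ι → Finset V} (hPk : ∀ i S, P i S → #S ≤ k i)
    (hP : ∀ i X, #X ≤ M → Disjoint X (D i) → ∃ S, P i S ∧ Disjoint S X)
    (hD : ∀ i j, i ≠ j → Disjoint (D i) (D j)) (hD2 : ∀ i, #(D i) ≤ 2)
    (hM : ∑ i, (k i + 2) ≤ M) (J : Finset ι) :
    ∃ S : ι → Finset V, (∀ i ∈ J, P i (S i) ∧ ∀ j ∉ J, Disjoint (S i) (D j)) ∧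
      ∀ i ∈ J, ∀ j ∈ J, i ≠ j → Disjoint (S i) (S j) := by
  induction J using Finset.induction_on with
  | empty => exact ⟨fun _ => ∅, by simp, by simp⟩
  | insert a J ha ih =>
    obtain ⟨S, h1, h2⟩ := ih
    let X := J.biUnion S ∪ (univ.erase a).biUnion D
    have hX : #X ≤ M := by
      have e1 : #(J.biUnion S) ≤ ∑ i, k i :=
        (card_biUnion_le.trans (sum_le_sum fun i hi => hPk i _ (h1 i hi).1)).trans
          (sum_le_univ_sum_of_nonneg fun _ => Nat.zero_le _)
      have e2 : #((univ.erase a).biUnion D) ≤ ∑ _i : ι, 2 :=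
        (card_biUnion_le.trans (sum_le_sum fun i _ => hD2 i)).trans
          (sum_le_univ_sum_of_nonneg fun _ => Nat.zero_le _)
      rw [sum_add_distrib] at hM
      exact (card_union_le _ _).trans (by omega)
    obtain ⟨T, hT, hTX⟩ := hP a X hX (by
      refine disjoint_union_left.2 ⟨?_, ?_⟩
      · exact (disjoint_biUnion_left _ _ _).2 fun i hi => (h1 i hi).2 a ha
      · exact (disjoint_biUnion_left _ _ _).2 fun i hi => hD i a (ne_of_mem_erase hi))
    have hTX := disjoint_union_right.1 hTX
    have hTS : ∀ i ∈ J, Disjoint T (S i) := (disjoint_biUnion_right _ _ _).1 hTX.1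
    have hTD : ∀ j ≠ a, Disjoint T (D j) := fun j hj =>
      (disjoint_biUnion_right _ _ _).1 hTX.2 j (mem_erase.2 ⟨hj, mem_univ _⟩)
    have hne : ∀ i ∈ J, i ≠ a := fun i hi e => ha (e ▸ hi)
    refine ⟨Function.update S a T, ?_, ?_⟩
    · intro i hi
      rcases mem_insert.1 hi with rfl | hi
      · rw [Function.update_self]
        exact ⟨hT, fun j hj => hTD j fun e => hj (e ▸ mem_insert_self _ _)⟩
      · rw [Function.update_of_ne (hne i hi)]
        exact ⟨(h1 i hi).1, fun j hj => (h1 i hi).2 j fun h => hj (mem_insert_of_mem h)⟩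
    · intro i hi j hj hij
      rcases mem_insert.1 hi with rfl | hi' <;> rcases mem_insert.1 hj with rfl | hj'
      · exact absurd rfl hij
      · rw [Function.update_self, Function.update_of_ne (hne j hj')]; exact hTS j hj'
      · rw [Function.update_self, Function.update_of_ne (hne i hi')]; exact (hTS i hi').symm
      · rw [Function.update_of_ne (hne i hi'), Function.update_of_ne (hne j hj')]
        exact h2 i hi' j hj' hij

/-- As many disjoint seeds as there are even wheels give a packing of all the wheels. -/
lemma packs_of_seeds {ι : Type*} [Fintype ι] {G : SimpleGraph V} {k : ι → ℕ} {M : ℕ}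
    (hk : ∀ i, 4 ≤ k i) (hM : ∑ i, (k i + 2) ≤ M) (hodd : HasOddWheels G M)
    {𝒟 : Finset (Finset V)} (h𝒟 : ∀ D ∈ 𝒟, Seed G M D ∧ #D ≤ 2)
    (hdisj : ∀ D ∈ 𝒟, ∀ D' ∈ 𝒟, D ≠ D' → Disjoint D D')
    (hcard : #{i | Even (k i)} ≤ #𝒟) : Packs G k := by
  have hkM : ∀ i, k i ≤ M := fun i =>
    ((Nat.le_add_right _ 2).trans (single_le_sum (f := fun i => k i + 2)
      (fun _ _ => Nat.zero_le _) (mem_univ i))).trans hM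
  obtain ⟨e⟩ : Nonempty (({i | Even (k i)} : Finset ι) ↪ 𝒟) := by
    rw [Function.Embedding.nonempty_iff_card_le, Fintype.card_coe, Fintype.card_coe]; exact hcard
  let D : ι → Finset V := fun i => if hi : Even (k i) then (e ⟨i, by simpa using hi⟩ : Finset V)
    else ∅
  have hP : ∀ i X, #X ≤ M → Disjoint X (D i) → ∃ S, WheelOn G (k i) S ∧ Disjoint S X := by
    intro i X hX hXD
    by_cases hi : Even (k i)
    · simp only [D, hi, dif_pos] at hXD
      exact (h𝒟 _ (e _).2).1 X hX hXD _ hi (hk i) (hkM i)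
    · exact hodd X hX _ hi (hk i) (hkM i)
  have hD : ∀ i j, i ≠ j → Disjoint (D i) (D j) := by
    intro i j hij
    by_cases hi : Even (k i)
    · by_cases hj : Even (k j)
      · simp only [D, hi, hj, dif_pos]
        refine hdisj _ (e _).2 _ (e _).2 fun h => hij ?_
        have := e.injective (Subtype.ext h)
        exact congrArg Subtype.val this
      · simp [D, hj]
    · simp [D, hi]
  have hD2 : ∀ i, #(D i) ≤ 2 := by
    intro i
    by_cases hi : Even (k i)
    · simp only [D, hi, dif_pos]; exact (h𝒟 _ (e _).2).2
    · simp [D, hi]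
  obtain ⟨S, h1, h2⟩ := exists_disjoint_family (fun i S h => h.1) hP hD hD2 hM univ
  exact ⟨S, fun i => (h1 i (mem_univ i)).1, fun i j => h2 i (mem_univ i) j (mem_univ j)⟩

/-- If the wheels, `s + 1` of which are even, cannot be packed, then the seeds of size one and two
are covered by a set `R` of at most `s` vertices, containing all seeds of size one, and a set
`Y` of at most `2 (s - #R)` further vertices: `Y` is the union of a maximum family of
disjoint seeds of size two that avoid `R`. -/
lemma exists_cover {ι : Type*} [Fintype ι] [Fintype V] {G : SimpleGraph V} {k : ι → ℕ} {M s : ℕ}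
    (hk : ∀ i, 4 ≤ k i) (hM : ∑ i, (k i + 2) ≤ M) (hodd : HasOddWheels G M)
    (hs : #{i | Even (k i)} = s + 1) (hG : ¬ Packs G k) :
    ∃ R Y : Finset V, #R ≤ s ∧ #Y ≤ 2 * (s - #R) ∧ (∀ v, Seed G M {v} → v ∈ R) ∧
      ∀ u w, u ≠ w → Seed G M {u, w} → u ∉ R → w ∉ R → u ∈ Y ∨ w ∈ Y := by
  let R : Finset V := {v | Seed G M {v}}
  let good : Finset (Finset V) → Prop := fun 𝒟 =>
    (∀ D ∈ 𝒟, Seed G M D ∧ #D = 2 ∧ Disjoint D R) ∧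
      ∀ D ∈ 𝒟, ∀ D' ∈ 𝒟, D ≠ D' → Disjoint D D'
  obtain ⟨𝒟, h𝒟, hmax⟩ := exists_max_image (univ.filter good) card
    ⟨∅, by simp [good]⟩
  simp only [mem_filter, mem_univ, true_and] at h𝒟 hmax
  have hcard : #𝒟 + #R ≤ s := by
    by_contra hlt
    apply hG
    have hdisjR : Disjoint 𝒟 (R.image fun v => {v}) := by
      rw [Finset.disjoint_left]
      intro D hD hD'
      obtain ⟨v, -, rfl⟩ := mem_image.1 hD'
      have := (h𝒟.1 _ hD).2.1
      simp at this
    have hRc : #(R.image fun v => ({v} : Finset V)) = #R :=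
      card_image_of_injective _ singleton_injective
    refine packs_of_seeds hk hM hodd (𝒟 := 𝒟 ∪ R.image fun v => {v}) ?_ ?_ ?_
    · intro D hD
      rcases mem_union.1 hD with hD | hD
      · exact ⟨(h𝒟.1 D hD).1, (h𝒟.1 D hD).2.1.le⟩
      · obtain ⟨v, hv, rfl⟩ := mem_image.1 hD
        exact ⟨(mem_filter.1 hv).2, by simp⟩
    · intro D hD D' hD' hne
      rcases mem_union.1 hD with hD | hD <;> rcases mem_union.1 hD' with hD' | hD'
      · exact h𝒟.2 D hD D' hD' hne
      · obtain ⟨v, hv, rfl⟩ := mem_image.1 hD'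
        exact (h𝒟.1 D hD).2.2.mono_right (singleton_subset_iff.2 hv)
      · obtain ⟨v, hv, rfl⟩ := mem_image.1 hD
        exact ((h𝒟.1 D' hD').2.2.mono_right (singleton_subset_iff.2 hv)).symm
      · obtain ⟨v, hv, rfl⟩ := mem_image.1 hD
        obtain ⟨v', hv', rfl⟩ := mem_image.1 hD'
        simpa using fun h : v = v' => hne (by rw [h])
    · rw [card_union_of_disjoint hdisjR, hRc, hs]; omega
  refine ⟨R, 𝒟.biUnion id, by omega, ?_, fun v hv => by simpa [R] using hv, ?_⟩
  · have : #(𝒟.biUnion id) ≤ ∑ D ∈ 𝒟, 2 :=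
      card_biUnion_le.trans (sum_le_sum fun D hD => (h𝒟.1 D hD).2.1.le)
    rw [sum_const, smul_eq_mul] at this
    omega
  · intro u w huw hseed hu hw
    by_contra! hnot
    have hY : ∀ D ∈ 𝒟, Disjoint ({u, w} : Finset V) D := by
      intro D hD
      simp only [disjoint_insert_left, disjoint_singleton_left]
      exact ⟨fun h => hnot.1 (mem_biUnion.2 ⟨D, hD, h⟩),
        fun h => hnot.2 (mem_biUnion.2 ⟨D, hD, h⟩)⟩
    have hnew : ({u, w} : Finset V) ∉ 𝒟 := fun h => by
      have := hY _ h
      simp at this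
    have hins := hmax (insert {u, w} 𝒟) ⟨?_, ?_⟩
    · rw [card_insert_of_notMem hnew] at hins; omega
    · intro D hD
      rcases mem_insert.1 hD with rfl | hD
      · refine ⟨hseed, card_pair huw, ?_⟩
        simp only [disjoint_insert_left, disjoint_singleton_left]
        exact ⟨hu, hw⟩
      · exact h𝒟.1 D hD
    · intro D hD D' hD' hne
      rcases mem_insert.1 hD with rfl | hD <;> rcases mem_insert.1 hD' with rfl | hD'
      · exact absurd rfl hne
      · exact hY _ hD'
      · exact (hY _ hD).symm
      · exact h𝒟.2 D hD D' hD' hne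

end Seeds

/-! ### Graphs of large minimum degree are nearly tripartite -/

section Structure

variable {V : Type*} [Fintype V]

/-- Every degree is at least `2 n / 3 - 2`, where `n` is the number of vertices. -/
def LargeDegrees (G : SimpleGraph V) : Prop :=
  ∀ v, 2 * Fintype.card V ≤ 3 * #{w | G.Adj v w} + 6

/-- The minimum degree version of the Erdős–Stone theorem, for three parts of size `T`. -/
lemma exists_tripartite (T : ℕ) : ∃ n₀, ∀ n ≥ n₀, ∀ G : SimpleGraph (Fin n), LargeDegrees G →
    ∃ A : Fin 3 → Finset (Fin n), (∀ i, #(A i) = T) ∧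
      ∀ i j, i ≠ j → ∀ a ∈ A i, ∀ b ∈ A j, G.Adj a b := by
  obtain ⟨n₁, h₁⟩ := Filter.eventually_atTop.1
    (eventually_completeEquipartiteGraph_isContained_of_minDegree
      (show (0 : ℝ) < 1 / 12 by norm_num) 2 T)
  refine ⟨n₁ + 24, fun n hn G hG => ?_⟩
  have : Nonempty (Fin n) := ⟨⟨0, by omega⟩⟩
  have hmin : 2 * n ≤ 3 * G.minDegree + 6 := by
    obtain ⟨v, hv⟩ := G.exists_minimal_degree_vertex
    have := hG v
    rw [Fintype.card_fin, ← neighborFinset_eq_filter, card_neighborFinset_eq_degree] at this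
    omega
  obtain ⟨f⟩ := h₁ n (by omega) (G := G) (by
    have h1 : (2 * n : ℝ) ≤ 3 * G.minDegree + 6 := by exact_mod_cast hmin
    have h2 : (24 : ℝ) ≤ n := by exact_mod_cast (by omega : 24 ≤ n)
    norm_num
    linarith)
  refine ⟨fun i => univ.image fun x => f (i, x), fun i => ?_, ?_⟩
  · rw [card_image_of_injective, card_univ, Fintype.card_fin]
    intro x y hxy
    exact (Prod.mk.inj (f.injective hxy)).2
  · intro i j hij a ha b hb
    obtain ⟨x, -, rfl⟩ := mem_image.1 ha
    obtain ⟨y, -, rfl⟩ := mem_image.1 hb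
    exact f.toHom.map_adj (completeEquipartiteGraph_adj.2 hij)

/-- The vertices outside the sets `B 0`, `B 1`, `B 2`. -/
noncomputable def rest (B : Fin 3 → Finset V) : Finset V := {v | ∀ i, v ∉ B i}

/-- Degree counting from a complete tripartite subgraph with parts `A i` of size `T`. Let `Z` meet
every seed of size one or two. A vertex outside `Z` has few neighbours in some `A i`, so by the
degree condition most vertices outside `Z` are joined to at least three quarters of the two other
sets, and two vertices attached in this way to the same two sets are not adjacent. -/
lemma exists_independent_parts {G : SimpleGraph V} {M T : ℕ} {A : Fin 3 → Finset V} {Z : Finset V}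
    (hT : 4 * M < T) (hA : ∀ i, #(A i) = T) (hAG : ∀ i j, i ≠ j → ∀ a ∈ A i, ∀ b ∈ A j, G.Adj a b)
    (hG : LargeDegrees G) (hZ1 : ∀ v, Seed G M {v} → v ∈ Z)
    (hZ2 : ∀ u w, u ≠ w → Seed G M {u, w} → u ∈ Z ∨ w ∈ Z) :
    ∃ B : Fin 3 → Finset V, (∀ i, ∀ u ∈ B i, ∀ w ∈ B i, ¬ G.Adj u w) ∧
      (∀ i j, i ≠ j → Disjoint (B i) (B j)) ∧
      T * #(rest B) ≤ 8 * M * Fintype.card V + 5 * T * #Z + 24 * T := by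
  have hAC : ∀ i j, i ≠ j → AlmostComplete G 0 (A i) (A j) := by
    intro i j hij
    constructor
    · intro a ha
      simpa [filter_eq_empty_iff] using hAG i j hij a ha
    · intro a ha
      simpa [filter_eq_empty_iff] using hAG j i hij.symm a ha
  have hsplit : ∀ v i, #{b ∈ A i | G.Adj v b} + #{b ∈ A i | ¬ G.Adj v b} = T := fun v i => by
    rw [card_filter_add_card_filter_not, hA]
  have hfew : ∀ v ∉ Z, ∃ i, #{b ∈ A i | G.Adj v b} ≤ 2 * M := by
    intro v hv
    by_contra! hcon
    exact hv (hZ1 v (seed_singleton hAC fun i => by simpa using hcon i))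
  let B : Fin 3 → Finset V :=
    fun i => {v | v ∉ Z ∧ ∀ j, j ≠ i → 4 * #{b ∈ A j | ¬ G.Adj v b} ≤ T}
  have hB : ∀ i v, v ∈ B i ↔ v ∉ Z ∧ ∀ j, j ≠ i → 4 * #{b ∈ A j | ¬ G.Adj v b} ≤ T := by
    intro i v; simp [B]
  refine ⟨B, ?_, ?_, ?_⟩
  · intro i u hu w hw huw
    rw [hB] at hu hw
    have key : ∀ j, j ≠ i → 0 + 2 * M < #{b ∈ A j | G.Adj u b ∧ G.Adj w b} := by
      intro j hj
      have h1 := hu.2 j hj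
      have h2 := hw.2 j hj
      have h3 := filter_not_le_add (B := A j) (P := fun b => G.Adj u b) (Q := fun b => G.Adj w b)
      rw [hA] at h3
      omega
    obtain ⟨j, j', hj, hj', hjj'⟩ : ∃ j j', j ≠ i ∧ j' ≠ i ∧ j ≠ j' := by
      generalize i = i'; revert i'; decide
    rcases hZ2 u w huw.ne (seed_pair (hAC j j' hjj') huw (key j hj) (key j' hj')) with h | h
    · exact hu.1 h
    · exact hw.1 h
  · intro i j hij
    rw [Finset.disjoint_left]
    intro v hv hv'
    rw [hB] at hv hv'
    obtain ⟨l, hl⟩ := hfew v hv.1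
    have h1 := hsplit v l
    by_cases hli : l = i
    · have := hv'.2 l (by rw [hli]; exact hij)
      omega
    · have := hv.2 l hli
      omega
  · let d : V → ℕ := fun v => ∑ i, #{b ∈ A i | G.Adj v b}
    -- double counting of the edges that meet the tripartite subgraph
    have hdc : ∑ v, d v = ∑ i, ∑ a ∈ A i, #{w | G.Adj a w} := by
      rw [sum_comm]
      refine sum_congr rfl fun i _ => ?_
      have := sum_card_bipartiteAbove_eq_sum_card_bipartiteBelow (s := (univ : Finset V))
        (t := A i) (fun v b => G.Adj v b)
      simp only [bipartiteAbove, bipartiteBelow] at this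
      rw [this]
      simp only [G.adj_comm]
    have hlow : 6 * T * Fintype.card V ≤ 3 * ∑ v, d v + 18 * T := by
      have h1 : ∀ i, 2 * T * Fintype.card V ≤ 3 * (∑ a ∈ A i, #{w | G.Adj a w}) + 6 * T := by
        intro i
        have := sum_le_sum fun a (_ : a ∈ A i) => hG a
        rw [sum_const, sum_add_distrib, ← mul_sum, sum_const, hA, smul_eq_mul, smul_eq_mul] at this
        linarith
      rw [hdc, Fin.sum_univ_three]
      have := h1 0
      have := h1 1
      have := h1 2
      linarith
    have hpt : ∀ v, 4 * d v + (if v ∈ rest B then T else 0) ≤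
        8 * T + 8 * M + (if v ∈ Z then 5 * T else 0) := by
      intro v
      have e : d v = #{b ∈ A 0 | G.Adj v b} + #{b ∈ A 1 | G.Adj v b} + #{b ∈ A 2 | G.Adj v b} :=
        Fin.sum_univ_three _
      have h0 := hsplit v 0
      have h1 := hsplit v 1
      have h2 := hsplit v 2
      by_cases hv : v ∈ Z
      · rw [if_pos hv]
        split_ifs <;> omega
      · rw [if_neg hv]
        obtain ⟨i, hi⟩ := hfew v hv
        by_cases hr : v ∈ rest B
        · rw [if_pos hr]
          have hnot : v ∉ B i := (mem_filter.1 hr).2 i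
          rw [hB] at hnot
          push Not at hnot
          obtain ⟨j, hji, hj⟩ := hnot hv
          fin_cases i <;> fin_cases j <;> simp at hi hj hji <;> omega
        · rw [if_neg hr]
          fin_cases i <;> simp at hi <;> omega
    have hsum := sum_le_sum fun v (_ : v ∈ (univ : Finset V)) => hpt v
    simp only [sum_add_distrib, ← mul_sum, sum_const, card_univ, smul_eq_mul, ← sum_filter,
      filter_univ_mem] at hsum
    linarith

/-- The partition produced by `exists_independent_parts` is extended to all vertices outside the
set `R` of seeds of size one: each vertex joins a part in which it has few neighbours. -/
lemma exists_coloring {G : SimpleGraph V} {M : ℕ} {B : Fin 3 → Finset V} {R Y : Finset V}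
    (hn : 600 + 200 * M ≤ Fintype.card V) (hB : ∀ i, ∀ u ∈ B i, ∀ w ∈ B i, ¬ G.Adj u w)
    (hdisj : ∀ i j, i ≠ j → Disjoint (B i) (B j)) (hrest : 100 * #(rest B) ≤ Fintype.card V)
    (hG : LargeDegrees G) (hR : ∀ v, Seed G M {v} → v ∈ R)
    (hY : ∀ u w, u ≠ w → Seed G M {u, w} → u ∉ R → w ∉ R → u ∈ Y ∨ w ∈ Y) :
    ∃ c : V → Fin 3,
      (∀ u w, u ∉ R → w ∉ R → c u = c w → G.Adj u w → u ∈ Y ∨ w ∈ Y) ∧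
      ∀ y ∉ R, 100 * #{w | w ∉ R ∧ c w = c y ∧ G.Adj y w} ≤ 6 * Fintype.card V := by
  set n := Fintype.card V with hn_def
  have hnon : ∀ v, 3 * #{w | ¬ G.Adj v w} ≤ n + 6 := by
    intro v
    have h1 := hG v
    have h2 := card_filter_add_card_filter_not (s := (univ : Finset V)) (fun w => G.Adj v w)
    rw [card_univ] at h2
    omega
  -- non-neighbours in two different parts
  have hnon2 : ∀ v i j, i ≠ j →
      3 * (#{b ∈ B i | ¬ G.Adj v b} + #{b ∈ B j | ¬ G.Adj v b}) ≤ n + 6 := by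
    intro v i j hij
    refine le_trans (Nat.mul_le_mul_left 3 ?_) (hnon v)
    rw [← card_union_of_disjoint (disjoint_filter_filter (hdisj i j hij))]
    refine card_le_card fun b hb => ?_
    simp only [mem_union, mem_filter, mem_univ, true_and] at hb ⊢
    tauto
  have hself : ∀ i, ∀ v ∈ B i, #{b ∈ B i | ¬ G.Adj v b} = #(B i) := by
    intro i v hv
    rw [filter_true_of_mem fun b hb => hB i v hv b hb]
  have hup : ∀ i, 3 * #(B i) ≤ n + 6 := by
    intro i
    rcases (B i).eq_empty_or_nonempty with h | ⟨v, hv⟩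
    · simp [h]
    · rw [← hself i v hv]
      exact (Nat.mul_le_mul_left 3 (card_le_card (filter_subset_filter _ (subset_univ _)))).trans
        (hnon v)
  have hcover : n ≤ #(rest B) + (#(B 0) + #(B 1) + #(B 2)) := by
    have hsub : (univ : Finset V) ⊆ rest B ∪ (B 0 ∪ B 1 ∪ B 2) := by
      intro v _
      by_cases hv : v ∈ rest B
      · exact mem_union_left _ hv
      · simp only [rest, mem_filter, mem_univ, true_and, not_forall, not_not] at hv
        obtain ⟨i, hi⟩ := hv
        refine mem_union_right _ ?_
        fin_cases i <;> simp at hi <;> simp [hi]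
    have h1 := card_le_card hsub
    have h2 := card_union_le (rest B) (B 0 ∪ B 1 ∪ B 2)
    have h3 := card_union_le (B 0 ∪ B 1) (B 2)
    have h4 := card_union_le (B 0) (B 1)
    rw [card_univ] at h1
    omega
  have hlow : ∀ i, 97 * n ≤ 300 * #(B i) + 1200 := by
    intro i
    have h0 := hup 0
    have h1 := hup 1
    have h2 := hup 2
    fin_cases i <;> simp only [Fin.zero_eta, Fin.mk_one, Fin.reduceFinMk] <;> omega
  have hmiss : ∀ i j, i ≠ j → ∀ v ∈ B i, 50 * #{b ∈ B j | ¬ G.Adj v b} ≤ n := by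
    intro i j hij v hv
    have h1 := hnon2 v i j hij
    rw [hself i v hv] at h1
    have h2 := hlow i
    omega
  let p := n / 50
  have hAC : ∀ i j, i ≠ j → AlmostComplete G p (B i) (B j) := by
    intro i j hij
    refine ⟨fun a ha => ?_, fun a ha => ?_⟩
    · have := hmiss i j hij a ha
      omega
    · have := hmiss j i hij.symm a ha
      omega
  have hc : ∀ v, ∃ i, v ∉ R → 20 * #{b ∈ B i | G.Adj v b} ≤ n := by
    intro v
    by_contra! hcon
    refine (hcon 0).1 (hR v (seed_singleton hAC fun i => ?_))
    have := (hcon i).2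
    omega
  choose c hc using hc
  have hsplit : ∀ v i, #{b ∈ B i | G.Adj v b} + #{b ∈ B i | ¬ G.Adj v b} = #(B i) := fun v i => by
    rw [card_filter_add_card_filter_not]
  have hmiss2 : ∀ v ∉ R, ∀ j, j ≠ c v → 100 * #{b ∈ B j | ¬ G.Adj v b} ≤ 7 * n := by
    intro v hv j hj
    have h1 := hnon2 v _ _ hj
    have h2 := hc v hv
    have h3 := hlow (c v)
    have h4 := hsplit v (c v)
    omega
  refine ⟨c, ?_, ?_⟩
  · intro u w hu hw huw hadj
    refine hY u w hadj.ne ?_ hu hw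
    have key : ∀ j, j ≠ c u → p + 2 * M < #{b ∈ B j | G.Adj u b ∧ G.Adj w b} := by
      intro j hj
      have h1 := hmiss2 u hu j hj
      have h2 := hmiss2 w hw j (huw ▸ hj)
      have h3 := filter_not_le_add (B := B j) (P := fun b => G.Adj u b) (Q := fun b => G.Adj w b)
      have h4 := hlow j
      omega
    obtain ⟨j, j', hj, hj', hjj'⟩ : ∃ j j', j ≠ c u ∧ j' ≠ c u ∧ j ≠ j' := by
      generalize c u = i; revert i; decide
    exact seed_pair (hAC j j' hjj') hadj (key j hj) (key j' hj')
  · intro y hy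
    have hsub : ({w | w ∉ R ∧ c w = c y ∧ G.Adj y w} : Finset V) ⊆
        rest B ∪ {b ∈ B (c y) | G.Adj y b} := by
      intro w hw
      simp only [mem_filter, mem_univ, true_and] at hw
      obtain ⟨hwR, hcw, hadj⟩ := hw
      by_cases hwr : w ∈ rest B
      · exact mem_union_left _ hwr
      · refine mem_union_right _ (mem_filter.2 ⟨?_, hadj⟩)
        simp only [rest, mem_filter, mem_univ, true_and, not_forall, not_not] at hwr
        obtain ⟨j, hj⟩ := hwr
        -- a vertex of `B j` is joined to most of the other parts, so its part must be `j`
        by_cases hjc : j = c w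
        · rwa [← hcw, ← hjc]
        · exfalso
          have h1 := hmiss j (c w) hjc w hj
          have h2 := hc w hwR
          have h3 := hsplit w (c w)
          have h4 := hlow (c w)
          omega
    have h1 := card_le_card hsub
    have h2 := card_union_le (rest B) {b ∈ B (c y) | G.Adj y b}
    have h3 := hc y hy
    omega

end Structure

/-! ### Counting edges -/

/-- The number of edges of the join of `K_s` with the Turán graph `T(n - s, 3)`, for `s ≤ n`. -/
def extremalSize (n s : ℕ) : ℕ := s.choose 2 + s * (n - s) + (n - s) ^ 2 / 3

section Counting

variable {V : Type*} [Fintype V]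

lemma sum_card_adj (G : SimpleGraph V) : ∑ v, #{w | G.Adj v w} = 2 * Nat.card G.edgeSet := by
  rw [Nat.card_eq_fintype_card, ← edgeFinset_card, ← sum_degrees_eq_twice_card_edges]
  refine sum_congr rfl fun v _ => ?_
  rw [← card_neighborFinset_eq_degree, neighborFinset_eq_filter]

/-- The numerical core of the edge count: `r` of the `n` vertices are in the cover, the other `N` are
partitioned into three classes whose squared sizes add up to `S`, and `J` bounds the number of edges
inside the classes. -/
lemma edge_arith {n s r e S J N : ℕ} (hrs : r ≤ s) (hN : N + r = n) (hS : N ^ 2 ≤ 3 * S)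
    (he : 2 * e + S ≤ r * (n - 1) + N * n + 2 * J) (hJ : 100 * J ≤ 12 * (s - r) * n)
    (hn : 2 * s + 10 ≤ n) : e ≤ extremalSize n s := by
  have hch : ∀ x : ℕ, 2 * x.choose 2 + x = x * x := by
    intro x
    have h1 : 2 * x.choose 2 = x * (x - 1) := by
      rw [Nat.choose_two_right, Nat.mul_div_cancel' (Nat.even_mul_pred_self x).two_dvd]
    rw [h1]
    cases x with
    | zero => rfl
    | succ x => simp; ring
  obtain ⟨d, rfl⟩ := Nat.exists_eq_add_of_le hrs
  obtain ⟨m, rfl⟩ : ∃ m, N = m + d := ⟨N - d, by omega⟩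
  have hnm : n - (r + d) = m := by omega
  have hJ' : 100 * J ≤ 12 * d * n := by simpa using hJ
  unfold extremalSize
  rw [hnm]
  have h1 := hch (r + d)
  have h3 : r * (n - 1) + r = r * n := by
    obtain ⟨n', rfl⟩ : ∃ n', n = n' + 1 := ⟨n - 1, by omega⟩
    simp; ring
  subst hN
  set Q := (r + d).choose 2
  have hdiv := Nat.div_add_mod (m ^ 2) 3
  have hmod := Nat.mod_lt (m ^ 2) (show 3 > 0 by norm_num)
  set q := m ^ 2 / 3
  have key : 6 * e < 6 * (Q + (r + d) * m + q) + 6 := by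
    -- `d` is the number of vertices by which the cover falls short of `s`
    rcases Nat.eq_zero_or_pos d with rfl | hd
    · have : J = 0 := by simpa using hJ'
      subst this
      nlinarith
    · have h4 : d * (2 * (r + d) + 10) ≤ d * (m + d + r) := Nat.mul_le_mul_left _ hn
      nlinarith
  omega

lemma card_edgeSet_le_of_coloring {G : SimpleGraph V} {s : ℕ} {c : V → Fin 3} {R Y : Finset V}
    (hR : #R ≤ s) (hY : #Y ≤ 2 * (s - #R))
    (hc : ∀ u w, u ∉ R → w ∉ R → c u = c w → G.Adj u w → u ∈ Y ∨ w ∈ Y)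
    (hdeg : ∀ y ∉ R, 100 * #{w | w ∉ R ∧ c w = c y ∧ G.Adj y w} ≤ 6 * Fintype.card V)
    (hn : 2 * s + 10 ≤ Fintype.card V) :
    Nat.card G.edgeSet ≤ extremalSize (Fintype.card V) s := by
  set n := Fintype.card V with hn_def
  let inner : V → Finset V := fun v => {w | w ∉ R ∧ c w = c v ∧ G.Adj v w}
  let U : Fin 3 → Finset V := fun i => {v | v ∉ R ∧ c v = i}
  have hmaps : ∀ v ∈ Rᶜ, c v ∈ (univ : Finset (Fin 3)) := fun _ _ => mem_univ _
  have hfib : ∀ i, (Rᶜ.filter fun v => c v = i) = U i := by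
    intro i; ext v; simp [U]
  have hUsum : #(Rᶜ) = ∑ i, #(U i) := by
    rw [card_eq_sum_card_fiberwise (f := c) hmaps]
    simp only [hfib]
  have hsq : ∑ v ∈ Rᶜ, #(U (c v)) = ∑ i, #(U i) ^ 2 := by
    rw [← sum_fiberwise_of_maps_to (g := c) hmaps]
    refine sum_congr rfl fun i _ => ?_
    rw [hfib, sum_congr rfl (g := fun _ => #(U i)), sum_const, smul_eq_mul, sq]
    intro v hv
    rw [(mem_filter.1 hv).2.2]
  have hN : #(Rᶜ) + #R = n := by rw [card_compl]; have := card_le_univ R; omega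
  have hCS : #(Rᶜ) ^ 2 ≤ 3 * ∑ i, #(U i) ^ 2 := by
    rw [hUsum]
    simpa using sq_sum_le_card_mul_sum_sq (s := (univ : Finset (Fin 3))) (f := fun i => #(U i))
  have hout : ∀ v, #{w | G.Adj v w} + #(U (c v)) ≤ n + #(inner v) := by
    intro v
    have h1 : #{w ∈ U (c v) | G.Adj v w} = #(inner v) := by
      congr 1; ext w; simp [U, inner, and_assoc]
    have h2 := card_filter_add_card_filter_not (s := U (c v)) (fun w => G.Adj v w)
    have h3 : #{w | G.Adj v w} + #{w ∈ U (c v) | ¬ G.Adj v w} ≤ n := by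
      rw [← card_union_of_disjoint]
      · exact card_le_univ _
      · rw [Finset.disjoint_left]
        intro w hw hw'
        exact (mem_filter.1 hw').2 (mem_filter.1 hw).2
    omega
  have hin : ∀ v ∈ R, #{w | G.Adj v w} ≤ n - 1 := by
    intro v _
    have : ({w | G.Adj v w} : Finset V) ⊆ univ.erase v := by
      intro w hw
      simp only [mem_filter, mem_univ, true_and] at hw
      simp [hw.ne']
    exact (card_le_card this).trans (by rw [card_erase_of_mem (mem_univ _), card_univ])
  -- every monochromatic edge has an end in `Y`
  have hmono : ∑ v ∈ Rᶜ, #(inner v) ≤ 2 * ∑ y ∈ Y \ R, #(inner y) := by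
    have h1 : ∑ v ∈ Rᶜ, #(inner v) ≤
        ∑ v ∈ Rᶜ, ((if v ∈ Y then #(inner v) else 0) + #{w ∈ Y \ R | c w = c v ∧ G.Adj v w}) := by
      refine sum_le_sum fun v hv => ?_
      split_ifs with hvY
      · omega
      · rw [zero_add]
        refine card_le_card fun w hw => ?_
        simp only [inner, mem_filter, mem_univ, true_and] at hw
        simp only [mem_filter, mem_sdiff]
        exact ⟨⟨(hc v w (by simpa using hv) hw.1 hw.2.1.symm hw.2.2).resolve_left hvY, hw.1⟩,
          hw.2⟩
    have h2 : ∑ v ∈ Rᶜ, (if v ∈ Y then #(inner v) else 0) = ∑ y ∈ Y \ R, #(inner y) := by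
      rw [← sum_filter]
      refine sum_congr ?_ fun _ _ => rfl
      ext v; simp [and_comm]
    have h3 : ∑ v ∈ Rᶜ, #{w ∈ Y \ R | c w = c v ∧ G.Adj v w} = ∑ y ∈ Y \ R, #(inner y) := by
      have := sum_card_bipartiteAbove_eq_sum_card_bipartiteBelow (s := Rᶜ) (t := Y \ R)
        (fun v w => c w = c v ∧ G.Adj v w)
      refine this.trans (sum_congr rfl fun y _ => ?_)
      congr 1
      ext w
      simp [bipartiteBelow, inner, G.adj_comm, eq_comm]
    rw [sum_add_distrib, h2, h3] at h1
    omega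
  have hJ : 100 * ∑ y ∈ Y \ R, #(inner y) ≤ 12 * (s - #R) * n := by
    rw [mul_sum]
    calc ∑ y ∈ Y \ R, 100 * #(inner y) ≤ ∑ y ∈ Y \ R, 6 * n :=
          sum_le_sum fun y hy => hdeg y (mem_sdiff.1 hy).2
      _ = #(Y \ R) * (6 * n) := by rw [sum_const, smul_eq_mul]
      _ ≤ 2 * (s - #R) * (6 * n) :=
          Nat.mul_le_mul_right _ ((card_le_card sdiff_subset).trans hY)
      _ = 12 * (s - #R) * n := by ring
  refine edge_arith hR hN hCS ?_ hJ hn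
  rw [← sum_card_adj, ← sum_add_sum_compl R]
  have h1 : ∑ v ∈ R, #{w | G.Adj v w} ≤ #R * (n - 1) := by
    simpa using sum_le_sum hin
  have h2 : ∑ v ∈ Rᶜ, #{w | G.Adj v w} + ∑ i, #(U i) ^ 2 ≤ #(Rᶜ) * n + ∑ v ∈ Rᶜ, #(inner v) := by
    rw [← hsq, ← sum_add_distrib]
    refine (sum_le_sum fun v _ => hout v).trans ?_
    rw [sum_add_distrib, sum_const, smul_eq_mul]
  omega

end Counting

/-! ### The upper bound -/

section Upper

variable {ι : Type*} [Fintype ι] {k : ι → ℕ} {s : ℕ}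

/-- The upper bound for graphs of large minimum degree. The size `1600 (M + 1)` of the parts of the
tripartite subgraph leaves at most `n / 100` vertices outside the independent parts. -/
lemma exists_minDegree_bound (hk : ∀ i, 4 ≤ k i) (hs : #{i | Even (k i)} = s + 1) :
    ∃ n₁, ∀ n ≥ n₁, ∀ G : SimpleGraph (Fin n), LargeDegrees G → ¬ Packs G k →
      Nat.card G.edgeSet ≤ extremalSize n s := by
  obtain ⟨M, hM⟩ : ∃ M, M = ∑ i, (k i + 2) := ⟨_, rfl⟩
  obtain ⟨n₀, h₀⟩ := exists_tripartite (1600 * (M + 1))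
  refine ⟨n₀ + 600 + 200 * M + 200 * (10 * s + 24), fun n hn G hG hP => ?_⟩
  obtain ⟨A, hA, hAG⟩ := h₀ n (by omega) G hG
  have hodd : HasOddWheels G M := by
    refine hasOddWheels (p := 0) (B := A) (fun i j hij => ⟨?_, ?_⟩) fun i => by rw [hA]; omega
    · intro a ha
      simpa [filter_eq_empty_iff] using hAG i j hij a ha
    · intro a ha
      simpa [filter_eq_empty_iff] using hAG j i hij.symm a ha
  obtain ⟨R, Y, hR, hY, hR1, hY1⟩ := exists_cover hk hM.ge hodd hs hP
  have hZ : #(R ∪ Y) ≤ 2 * s := (card_union_le _ _).trans (by omega)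
  obtain ⟨B, hB, hdisj, hrest⟩ := exists_independent_parts (Z := R ∪ Y) (M := M) (by omega) hA hAG
    hG (fun v hv => mem_union_left _ (hR1 v hv)) (by
      intro u w huw h
      by_cases hu : u ∈ R
      · exact Or.inl (mem_union_left _ hu)
      by_cases hw : w ∈ R
      · exact Or.inr (mem_union_left _ hw)
      exact (hY1 u w huw h hu hw).imp (mem_union_right _) (mem_union_right _))
  rw [Fintype.card_fin] at hrest
  have hrest' : 100 * #(rest B) ≤ n := by
    have h1 : 1600 * (M + 1) * #(rest B) ≤ (M + 1) * (8 * n + 1600 * (10 * s + 24)) := by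
      have : 5 * (1600 * (M + 1)) * #(R ∪ Y) ≤ 5 * (1600 * (M + 1)) * (2 * s) :=
        Nat.mul_le_mul_left _ hZ
      nlinarith
    have h2 : 1600 * #(rest B) ≤ 8 * n + 1600 * (10 * s + 24) :=
      Nat.le_of_mul_le_mul_left (by linarith) (Nat.succ_pos M)
    omega
  obtain ⟨c, hc, hdeg⟩ := exists_coloring (M := M) (B := B) (R := R) (Y := Y)
    (by rw [Fintype.card_fin]; omega) hB hdisj
    (by rw [Fintype.card_fin]; exact hrest') hG hR1 hY1
  simpa using card_edgeSet_le_of_coloring hR hY hc hdeg (by rw [Fintype.card_fin]; omega)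

lemma Packs.of_hom {ι : Type*} {k : ι → ℕ} {V W : Type*} [Fintype V] [Fintype W]
    {G : SimpleGraph V} {H : SimpleGraph W}
    (f : G →g H) (hf : Function.Injective f) (h : Packs G k) : Packs H k := by
  obtain ⟨S, hS, hd⟩ := h
  refine ⟨fun i => (S i).map ⟨f, hf⟩, fun i => ?_, fun i j hij => by
    simpa using hd i j hij⟩
  obtain ⟨hcard, g, hg, hgS⟩ := hS i
  exact ⟨by simpa using hcard, f.comp g, hf.comp hg, fun x => mem_map.2 ⟨g x, hgS x, rfl⟩⟩

lemma card_edgeSet_comap_succAbove {n : ℕ} (G : SimpleGraph (Fin (n + 1))) (v : Fin (n + 1)) :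
    Nat.card G.edgeSet = Nat.card (G.comap v.succAbove).edgeSet + #{w | G.Adj v w} := by
  have h1 := sum_card_adj G
  have h2 := sum_card_adj (G.comap v.succAbove)
  have key : ∀ x, #{w | G.Adj x w} =
      (if G.Adj x v then 1 else 0) + #{w | G.Adj x (v.succAbove w)} := by
    intro x
    simp only [card_filter]
    rw [Fin.sum_univ_succAbove _ v]
  rw [Fin.sum_univ_succAbove _ v] at h1
  simp only [comap_adj] at h2
  have h3 : ∑ w, #{x | G.Adj (v.succAbove w) x} =
      #{w | G.Adj v (v.succAbove w)} + ∑ w, #{x | G.Adj (v.succAbove w) (v.succAbove x)} := by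
    rw [sum_congr rfl fun w _ => key _, sum_add_distrib, ← card_filter]
    simp only [G.adj_comm]
  have h4 := key v
  simp only [G.irrefl, if_false, zero_add] at h4
  omega

/-- The extremal size grows by at least `s + 2 (n - s) / 3 - 1 / 3` from `n` to `n + 1`. -/
lemma extremalSize_succ (n : ℕ) (hn : s ≤ n) :
    3 * extremalSize n s + 3 * s + 2 * (n - s) ≤ 3 * extremalSize (n + 1) s + 1 := by
  obtain ⟨N, rfl⟩ := Nat.exists_eq_add_of_le hn
  have h1 : s + N + 1 - s = N + 1 := by omega
  have h2 : s + N - s = N := by omega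
  unfold extremalSize
  rw [h1, h2]
  have hq : 3 * (N ^ 2 / 3) + 2 * N ≤ 3 * ((N + 1) ^ 2 / 3) + 1 := by
    obtain ⟨q, hq⟩ : ∃ q, N = 3 * q ∨ N = 3 * q + 1 ∨ N = 3 * q + 2 := ⟨N / 3, by omega⟩
    have a1 : (3 * q) ^ 2 = 3 * (3 * q ^ 2) := by ring
    have a2 : (3 * q + 1) ^ 2 = 3 * (3 * q ^ 2 + 2 * q) + 1 := by ring
    have a3 : (3 * q + 1 + 1) ^ 2 = 3 * (3 * q ^ 2 + 4 * q + 1) + 1 := by ring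
    have a4 : (3 * q + 2 + 1) ^ 2 = 3 * (3 * q ^ 2 + 6 * q + 3) := by ring
    have a5 : (3 * q + 2) ^ 2 = 3 * (3 * q ^ 2 + 4 * q + 1) + 1 := by ring
    rcases hq with rfl | rfl | rfl
    · omega
    · omega
    · omega
  have : 3 * (s * (N + 1)) = 3 * (s * N) + 3 * s := by ring
  omega

/-- Deleting a vertex of small degree gains one edge relative to the extremal size. -/
lemma card_edgeSet_le_of_not_largeDegrees {ι : Type*} {k : ι → ℕ} {n b : ℕ} (hn : s ≤ n)
    {G : SimpleGraph (Fin (n + 1))} (hG : ¬ Packs G k) (hL : ¬ LargeDegrees G)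
    (ih : ∀ G : SimpleGraph (Fin n), ¬ Packs G k → Nat.card G.edgeSet ≤ extremalSize n s + b) :
    Nat.card G.edgeSet ≤ extremalSize (n + 1) s + (b - 1) := by
  unfold LargeDegrees at hL
  push Not at hL
  obtain ⟨v, hv⟩ := hL
  rw [Fintype.card_fin] at hv
  have h1 := card_edgeSet_comap_succAbove G v
  have h2 := ih (G.comap v.succAbove) fun h =>
    hG (h.of_hom (H := G) ⟨v.succAbove, fun h => h⟩ Fin.succAbove_right_injective)
  have h3 := extremalSize_succ n hn
  omega

/-- Vertices of small degree are deleted until the minimum degree bound applies. As a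
graph on `a` vertices has at most `a ^ 2` edges, `a ^ 2` deletions from a graph on `a + a ^ 2`
vertices that exceeds the extremal size would lead to a contradiction. -/
lemma exists_bound (hk : ∀ i, 4 ≤ k i) (hs : #{i | Even (k i)} = s + 1) :
    ∃ n₁, ∀ n ≥ n₁, ∀ G : SimpleGraph (Fin n), ¬ Packs G k →
      Nat.card G.edgeSet ≤ extremalSize n s := by
  obtain ⟨n₀, h₀⟩ := exists_minDegree_bound hk hs
  obtain ⟨n₁, rfl⟩ : ∃ n₁, n₁ = n₀ + s := ⟨_, rfl⟩
  have main : ∀ t, ∀ G : SimpleGraph (Fin (n₀ + s + t)), ¬ Packs G k →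
      Nat.card G.edgeSet ≤ extremalSize (n₀ + s + t) s + ((n₀ + s) ^ 2 - t) := by
    intro t
    induction t with
    | zero =>
      intro G _
      have h1 := sum_card_adj G
      have h2 : ∑ v, #{w | G.Adj v w} ≤ (n₀ + s) * (n₀ + s) := by
        refine (sum_le_card_nsmul univ _ (n₀ + s) fun v _ => ?_).trans (by simp)
        simpa using card_le_univ (α := Fin (n₀ + s)) {w | G.Adj v w}
      rw [sq]
      simp only [Nat.add_zero] at *
      omega
    | succ t ih =>
      intro G hG
      by_cases hL : LargeDegrees G
      · exact (h₀ _ (by omega) G hL hG).trans (Nat.le_add_right _ _)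
      · have := card_edgeSet_le_of_not_largeDegrees (n := n₀ + s + t) (by omega) hG hL ih
        exact this.trans (by rw [Nat.sub_sub]; rfl)
  refine ⟨n₀ + s + (n₀ + s) ^ 2, fun n hn G hG => ?_⟩
  obtain ⟨t, rfl⟩ := Nat.exists_eq_add_of_le (show n₀ + s ≤ n by omega)
  have := main t G hG
  omega

end Upper

/-! ### The extremal graph and the Turán number -/

/-- The join of `K_s` with the Turán graph `T(n - s, 3)`: the vertices below `s` are joined to
everything, and the remaining ones are coloured by residues modulo `3`. -/
def extremalGraph (n s : ℕ) : SimpleGraph (Fin n) where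
  Adj u v := u ≠ v ∧ ((u : ℕ) < s ∨ (v : ℕ) < s ∨ ((u : ℕ) - s) % 3 ≠ ((v : ℕ) - s) % 3)
  symm := ⟨fun u v h => ⟨h.1.symm, by tauto⟩⟩
  loopless := ⟨fun u h => h.1 rfl⟩

lemma card_edgeSet_turanGraph_three (n : ℕ) : Nat.card (turanGraph n 3).edgeSet = n ^ 2 / 3 := by
  have h := card_edgeFinset_turanGraph (n := n) (r := 3)
  rw [Nat.card_eq_fintype_card, ← edgeFinset_card]
  rw [show #(turanGraph n 3).edgeFinset = _ by convert h]
  obtain ⟨q, hq⟩ : ∃ q, n = 3 * q ∨ n = 3 * q + 1 ∨ n = 3 * q + 2 := ⟨n / 3, by omega⟩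
  have a1 : (3 * q) ^ 2 = 9 * q ^ 2 := by ring
  have a2 : (3 * q + 1) ^ 2 = 9 * q ^ 2 + 6 * q + 1 := by ring
  have a3 : (3 * q + 2) ^ 2 = 9 * q ^ 2 + 12 * q + 4 := by ring
  rcases hq with rfl | rfl | rfl
  · have : (3 * q) % 3 = 0 := by omega
    rw [this, a1]; simp; omega
  · have : (3 * q + 1) % 3 = 1 := by omega
    rw [this, a2]; simp; omega
  · have : (3 * q + 2) % 3 = 2 := by omega
    rw [this, a3]; simp; omega

lemma extremalGraph_zero (n : ℕ) : extremalGraph n 0 = turanGraph n 3 := by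
  ext u v
  simp only [extremalGraph, turanGraph]
  constructor
  · rintro ⟨-, h⟩; simpa using h
  · intro h; exact ⟨fun e => h (by rw [e]), by simpa using h⟩

lemma extremalGraph_comap_succAbove (n s : ℕ) :
    (extremalGraph (n + 1) (s + 1)).comap (Fin.succAbove 0) = extremalGraph n s := by
  ext u v
  simp [extremalGraph]

lemma card_edgeSet_extremalGraph (s : ℕ) : ∀ n, s ≤ n →
    Nat.card (extremalGraph n s).edgeSet = extremalSize n s := by
  induction s with
  | zero =>
    intro n _
    rw [extremalGraph_zero, card_edgeSet_turanGraph_three]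
    simp [extremalSize]
  | succ s ih =>
    rintro (_ | n) hn
    · omega
    have h0 : #{w | (extremalGraph (n + 1) (s + 1)).Adj 0 w} = n := by
      have : ({w | (extremalGraph (n + 1) (s + 1)).Adj 0 w} : Finset (Fin (n + 1))) =
          univ.erase 0 := by
        ext w; simp [extremalGraph, eq_comm]
      rw [this, card_erase_of_mem (mem_univ _)]; simp
    rw [card_edgeSet_comap_succAbove _ 0, h0, extremalGraph_comap_succAbove, ih n (by omega)]
    obtain ⟨N, rfl⟩ := Nat.exists_eq_add_of_le (show s ≤ n by omega)
    have h1 : s + N + 1 - (s + 1) = N := by omega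
    have h2 : s + N - s = N := by omega
    have h3 : (s + 1).choose 2 = s + s.choose 2 := by
      rw [Nat.choose_succ_succ' s 1, Nat.choose_one_right]
    have h4 : (s + 1) * N = s * N + N := by ring
    simp only [extremalSize, h1, h2, h3, h4]
    omega

/-- The rim of an even wheel is an odd cycle, and in a `3`-colouring it would avoid the colour of the
hub. -/
lemma not_colorable_wheelGraph {q : ℕ} (hq : 4 ≤ q) (he : Even q) :
    ¬ (wheelGraph q).Colorable 3 := by
  rintro ⟨c⟩
  have h1 : ∀ x, c (Sum.inr x) ≠ c (Sum.inl ()) := fun x h =>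
    c.valid (wheelGraph_adj_inl_inr q () x) h.symm
  have h2 : ∀ a x y : Fin 3, x ≠ a → y ≠ a → x ≠ y → decide (x = a + 1) ≠ decide (y = a + 1) := by
    decide
  have h3 : (cycleGraph (q - 1)).Colorable 2 :=
    (Coloring.mk (fun x => decide (c (Sum.inr x) = c (Sum.inl ()) + 1)) fun {x y} hxy =>
      h2 _ _ _ (h1 x) (h1 y) (c.valid (wheelGraph_adj_inr_inr.2 hxy))).colorable
  have h4 := chromaticNumber_cycleGraph_of_odd (q - 1) (by omega)
    (by rw [Nat.odd_sub (by omega)]; simpa using he)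
  have h5 := h3.chromaticNumber_le
  rw [h4] at h5
  exact absurd h5 (by decide)

lemma exists_lt_of_wheel {q n s : ℕ} (hq : 4 ≤ q) (he : Even q)
    (f : wheelGraph q →g extremalGraph n s) : ∃ x, (f x : ℕ) < s := by
  by_contra! h
  refine not_colorable_wheelGraph hq he ⟨Coloring.mk
    (fun x => (⟨((f x : ℕ) - s) % 3, Nat.mod_lt _ (by norm_num)⟩ : Fin 3)) fun {x y} hxy e => ?_⟩
  have h1 := (f.map_adj hxy).2
  have h2 := h x
  have h3 := h y
  simp only [Fin.mk.injEq] at e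
  omega

section Glue

variable {m : ℕ} {k : Fin m → ℕ}

lemma disjointSigma_adj {ι : Type*} {V : ι → Type*} {G : ∀ i, SimpleGraph (V i)} {i : ι}
    {x y : V i} (h : (G i).Adj x y) : (disjointSigma G).Adj ⟨i, x⟩ ⟨i, y⟩ := by
  refine ⟨fun e => h.ne ?_, Or.inl ⟨rfl, h⟩⟩
  simpa using e

lemma Packs.contains {V : Type*} {G : SimpleGraph V} (h : Packs G k) :
    Contains G (disjointSigma fun i => wheelGraph (k i)) := by
  obtain ⟨S, hS, hd⟩ := h
  choose _ f hf hfS using hS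
  refine ⟨⟨fun x => f x.1 x.2, ?_⟩, ?_⟩
  · rintro ⟨i, x⟩ ⟨j, y⟩ ⟨-, ⟨h, hadj⟩ | ⟨h, hadj⟩⟩
    · dsimp only at h
      subst h
      exact (f i).map_adj hadj
    · dsimp only at h
      subst h
      exact ((f j).map_adj hadj).symm
  · rintro ⟨i, x⟩ ⟨j, y⟩ hxy
    change f i x = f j y at hxy
    by_cases hij : i = j
    · subst hij
      rw [hf i hxy]
    · exact absurd (hxy ▸ hfS i x) (Finset.disjoint_right.1 (hd i j hij) (hfS j y))

lemma not_contains_extremalGraph {n s : ℕ} (hk : ∀ i, 4 ≤ k i) (hs : #{i | Even (k i)} = s + 1) :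
    ¬ Contains (extremalGraph n s) (disjointSigma fun i => wheelGraph (k i)) := by
  rintro ⟨F, hF⟩
  have h1 : ∀ i : {i // Even (k i)}, ∃ x, (F ⟨i.1, x⟩ : ℕ) < s := fun i =>
    exists_lt_of_wheel (hk i) i.2 ⟨fun x => F ⟨i, x⟩, fun h => F.map_adj (disjointSigma_adj h)⟩
  choose x hx using h1
  have h2 : Function.Injective fun i => (⟨F ⟨i.1, x i⟩, hx i⟩ : Fin s) := by
    intro i j hij
    have := hF (Fin.ext (Fin.mk.inj hij))
    exact Subtype.ext (Sigma.mk.inj this).1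
  have h3 := Fintype.card_le_of_injective _ h2
  rw [Fintype.card_subtype, Fintype.card_fin] at h3
  omega

lemma exNum_eq {n s : ℕ} (hk : ∀ i, 4 ≤ k i) (hs : #{i | Even (k i)} = s + 1) (hn : s ≤ n)
    (hub : ∀ G : SimpleGraph (Fin n), ¬ Packs G k → Nat.card G.edgeSet ≤ extremalSize n s) :
    exNum n (disjointSigma fun i => wheelGraph (k i)) = extremalSize n s := by
  refine IsGreatest.csSup_eq
    ⟨⟨_, not_contains_extremalGraph hk hs, card_edgeSet_extremalGraph s n hn⟩, ?_⟩
  rintro _ ⟨G, hG, rfl⟩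
  exact hub G fun h => hG h.contains

end Glue

end WheelTuran

/-- Turán number of a disjoint union of wheels with `h ≥ 1` even wheels. -/
theorem turanNumber_union_wheels_with_even (m : ℕ) (k : Fin m → ℕ) (hk : ∀ i, 4 ≤ k i)
    (h : ℕ) (hh : h = (Finset.univ.filter (fun i => Even (k i))).card) (hh1 : 1 ≤ h) :
    ∃ n₀ : ℕ, ∀ n : ℕ, n > n₀ →
      exNum n (disjointSigma (fun i => wheelGraph (k i))) =
        (h - 1).choose 2 + (h - 1) * (n - h + 1) +
          Nat.card (turanGraph (n - h + 1) 3).edgeSet := by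
  obtain ⟨s, rfl⟩ : ∃ s, h = s + 1 := ⟨h - 1, by omega⟩
  obtain ⟨n₁, h₁⟩ := WheelTuran.exists_bound hk hh.symm
  refine ⟨n₁ + s, fun n hn => ?_⟩
  rw [WheelTuran.exNum_eq hk hh.symm (by omega) (h₁ n (by omega)),
    WheelTuran.card_edgeSet_turanGraph_three, show n - (s + 1) + 1 = n - s by omega,
    Nat.add_sub_cancel]
  rfl
end
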